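/- arXiv:2409.18123 — 2 statements merged into one kernel-verified Lean document; each statement's English description precedes it below -/
import Mathlib

section
/- Let M be a Coxeter matrix on a finite set S with at least 3 elements such that for all s ≠ t either M s t = 0 or M s t ≥ 3 (large type), such that there are no three pairwise distinct s, t, u ∈ S with M s t = M t u = M s u = 3 (hyperbolic type), and such that the presentation graph Γ of M admits a twistless hierarchy terminating in twistless stars. Then the Artin group A[M] has property R_∞. -/
/-- Two elements `g h` of a group `G` are `φ`-twisted conjugate if there is `x : G`
with `h = x * g * (φ x)⁻¹`. -/
def TwistedConj {G : Type*} [Group G] (φ : G ≃* G) (g h : G) : Prop :=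
  ∃ x : G, h = x * g * (φ x)⁻¹

/-- `R(φ) = ∞`: the set of `φ`-twisted conjugacy classes is infinite. -/
def ReidemeisterInfinite {G : Type*} [Group G] (φ : G ≃* G) : Prop :=
  Infinite (Quot (TwistedConj φ))

/-- A group `G` has property `R_∞` if `R(φ) = ∞` for every automorphism `φ` of `G`. -/
def PropertyRInfinity (G : Type*) [Group G] : Prop :=
  ∀ φ : G ≃* G, ReidemeisterInfinite φ

/-- `M` is a Coxeter matrix on `S`: symmetric, with `M s s = 1` and `M s t ≠ 1` off the
diagonal (the value `0` encodes the label `∞`). -/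
def IsCoxeterMatrix {S : Type*} (M : S → S → ℕ) : Prop :=
  (∀ s t, M s t = M t s) ∧ (∀ s, M s s = 1) ∧ (∀ s t, s ≠ t → M s t ≠ 1)

/-- The alternating word `Π(s,t,m) = s t s t ⋯` of length `m`, as an element
of the free group. -/
def altWord {S : Type*} (s t : S) (m : ℕ) : FreeGroup S :=
  ((List.range m).map (fun k => if k % 2 = 0 then FreeGroup.of s else FreeGroup.of t)).prod

/-- The Artin relations associated with a Coxeter matrix `M`: for every pair `s ≠ t`
with `M s t = m ≥ 2` the relation `Π(s,t,m) = Π(t,s,m)`; pairs with `M s t = 0`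
contribute no relation. -/
def artinRels {S : Type*} (M : S → S → ℕ) : Set (FreeGroup S) :=
  { r | ∃ s t : S, s ≠ t ∧ 2 ≤ M s t ∧
      r = altWord s t (M s t) * (altWord t s (M s t))⁻¹ }

/-- The Artin group of the Coxeter matrix `M`. -/
abbrev ArtinGroup {S : Type*} (M : S → S → ℕ) : Type _ := PresentedGroup (artinRels M)

/-- The image `t_s` in the Artin group of the standard generator `s`. -/
abbrev artinGen {S : Type*} (M : S → S → ℕ) (s : S) : ArtinGroup M :=
  PresentedGroup.of (rels := artinRels M) s

/-- The presentation graph of a Coxeter matrix `M`: vertices are the elements of `S`,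
and `s ≠ t` are adjacent if and only if `M s t ≠ 0`. -/
def presGraph {S : Type*} (M : S → S → ℕ) : SimpleGraph S :=
  SimpleGraph.fromRel (fun s t => M s t ≠ 0)

/-- A graph is twistless if it is connected, has no cut-vertex (removing any single
vertex leaves a connected graph) and no separating edge (removing the two endpoints of
any edge, together with all incident edges, leaves a connected graph). -/
def Twistless {V : Type*} (G : SimpleGraph V) : Prop :=
  G.Connected ∧
  (∀ v : V, (G.induce {u : V | u ≠ v}).Connected) ∧
  (∀ s t : V, G.Adj s t → (G.induce {u : V | u ≠ s ∧ u ≠ t}).Connected)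

/-- A graph is a twistless star if it is twistless and some vertex is adjacent to
every other vertex. -/
def TwistlessStar {V : Type*} (G : SimpleGraph V) : Prop :=
  Twistless G ∧ ∃ v : V, ∀ u : V, u ≠ v → G.Adj v u

/-- The induced subgraph of `G` on a vertex set `U` admits a twistless hierarchy
terminating in twistless stars: either it is itself a twistless star, or it has a
twistless admissible decomposition into two proper induced subgraphs each of which
admits such a hierarchy. -/
inductive AdmitsTwistlessHierarchy {V : Type*} (G : SimpleGraph V) : Set V → Prop where
  | star (U : Set V) (h : TwistlessStar (G.induce U)) : AdmitsTwistlessHierarchy G U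
  | decomp (U V₁ V₂ : Set V)
      (hunion : V₁ ∪ V₂ = U) (h1 : V₁ ≠ U) (h2 : V₂ ≠ U)
      (hedges : ∀ s t : V, s ∈ U → t ∈ U → G.Adj s t →
        (s ∈ V₁ ∧ t ∈ V₁) ∨ (s ∈ V₂ ∧ t ∈ V₂))
      (hne : (V₁ ∩ V₂).Nonempty)
      (hvertex : ¬ ∃ v : V, V₁ ∩ V₂ = {v})
      (hedge : ¬ ∃ s t : V, G.Adj s t ∧ V₁ ∩ V₂ = {s, t})
      (hh1 : AdmitsTwistlessHierarchy G V₁) (hh2 : AdmitsTwistlessHierarchy G V₂) :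
      AdmitsTwistlessHierarchy G U

/-!
A finitely generated group which is large has property `R_∞`. Finiteness of a Reidemeister number
passes to characteristic subgroups of finite index, hence to one, `E`, which maps onto every
alternating group of degree at least `5`. By Burnside's lemma, the Reidemeister number of an
automorphism of a finite group is the number of invariant conjugacy classes. Let `P` be a finite set
of odd primes and divide `E` by the intersection of the kernels of all surjections onto alternating
groups of degree `p + 2` with `p ∈ P`. These kernels are maximal normal subgroups with nonabelian
quotients, so the quotient is the product of the corresponding alternating groups. For each `p`, the
elements of order `p` in every factor of degree `p + 2` and trivial in the others form a single
conjugacy class, which is therefore invariant. Hence the Reidemeister number is at least `|P|`.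

An Artin group is large if three of its generators have pairwise labels different from `2`. Let it
act by the geometric representation over the ring generated by the numbers `2 cos (π / M s t)`, and
colour the walls whose root is congruent to `± e_s` modulo `k`. If `k` separates the roots of each
rank-two subsystem, at most one of the walls crossed by the two sides of a braid relation is
coloured, so the product of the classes modulo a multiple `k'` of `k` of the roots of the coloured
walls crossed by an element, taken in a free group, is well defined; it is a homomorphism on the
congruence subgroup of level `k'`. For each coloured wall which bounds the region of the identity,
there is an element which goes to the wall without crossing a coloured one, crosses it twice and
returns, and two walls with different roots give elements with noncommuting images. A second
boundary wall exists: otherwise every coloured root would be `± e_s`, while the product of the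
reflections `s` and `t u t⁻¹` has infinite order, and a power of it in the congruence subgroup of
level `k` moves `e_s` to another coloured root.
-/

open Function

section TwistedConjugacy

variable {G : Type*} [Group G]

theorem TwistedConj.equivalence (φ : G ≃* G) : Equivalence (TwistedConj φ) where
  refl g := ⟨1, by simp⟩
  symm := by
    rintro g _ ⟨x, rfl⟩
    exact ⟨x⁻¹, by simp [mul_assoc]⟩
  trans := by
    rintro g _ _ ⟨x, rfl⟩ ⟨y, rfl⟩
    exact ⟨y * x, by simp [mul_assoc]⟩

/-- The restriction of an automorphism to a characteristic subgroup. -/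
def characteristicRestrict (φ : G ≃* G) (K : Subgroup G) [hK : K.Characteristic] : K ≃* K :=
  (φ.subgroupMap K).trans (MulEquiv.subgroupCongr (Subgroup.characteristic_iff_map_eq.1 hK φ))

theorem finite_twistedConj_characteristicRestrict (φ : G ≃* G) (K : Subgroup G) [K.FiniteIndex]
    [K.Characteristic] [Finite (Quot (TwistedConj φ))] :
    Finite (Quot (TwistedConj (characteristicRestrict φ K))) := by
  have exists_twist (g : G) : TwistedConj φ (Quot.mk (TwistedConj φ) g).out g :=
    (TwistedConj.equivalence φ).quot_mk_eq_iff _ _ |>.1 (Quot.out_eq _)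
  choose x hx using exists_twist
  -- Elements `a`, `b` of one `φ`-class are twisted conjugate by `x b * (x a)⁻¹`.
  refine Finite.of_injective (fun q : Quot (TwistedConj (characteristicRestrict φ K)) ↦
    (Quot.mk (TwistedConj φ) (q.out : G), (QuotientGroup.mk (x q.out)⁻¹ : G ⧸ K))) fun p q hpq ↦ ?_
  obtain ⟨hclass, hcoset⟩ := Prod.mk.inj hpq
  have hmem : x q.out * (x p.out)⁻¹ ∈ K := by simpa using QuotientGroup.eq.1 hcoset.symm
  rw [← Quot.out_eq p, ← Quot.out_eq q, (TwistedConj.equivalence _).quot_mk_eq_iff]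
  refine ⟨⟨_, hmem⟩, Subtype.ext ?_⟩
  calc (q.out : G)
    _ = x q.out * (Quot.mk _ (p.out : G)).out * (φ (x q.out))⁻¹ := hclass ▸ hx q.out
    _ = x q.out * (x p.out)⁻¹ * (x p.out * (Quot.mk _ (p.out : G)).out * (φ (x p.out))⁻¹)
          * (φ (x q.out * (x p.out)⁻¹))⁻¹ := by simp [mul_assoc]
    _ = _ := congrArg (x q.out * (x p.out)⁻¹ * · * (φ (x q.out * (x p.out)⁻¹))⁻¹) (hx p.out).symm

end TwistedConjugacy

section InvariantConjClasses

variable {H : Type*} [Group H]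

/-- The action of a group on itself whose orbits are the twisted conjugacy classes. -/
abbrev twistedAction (ψ : H ≃* H) : MulAction H H where
  smul x g := x * g * (ψ x)⁻¹
  one_smul g := by simp [HSMul.hSMul]
  mul_smul x y g := by simp [HSMul.hSMul, mul_assoc]

theorem fixedBy_twistedAction (ψ : H ≃* H) (x : H) :
    letI := twistedAction ψ
    MulAction.fixedBy H x = {g | g * ψ x * g⁻¹ = x} := by
  ext g
  change x * g * (ψ x)⁻¹ = g ↔ g * ψ x * g⁻¹ = x
  rw [mul_inv_eq_iff_eq_mul, mul_inv_eq_iff_eq_mul, eq_comm]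

theorem orbitRel_twistedAction (ψ : H ≃* H) :
    letI := twistedAction ψ
    (MulAction.orbitRel H H).r = TwistedConj ψ := by
  ext g h
  refine ⟨?_, fun hgh ↦ ?_⟩
  · rintro ⟨x, rfl⟩
    exact (TwistedConj.equivalence ψ).symm ⟨x, rfl⟩
  · obtain ⟨x, rfl⟩ := (TwistedConj.equivalence ψ).symm hgh
    exact ⟨x, rfl⟩

theorem card_conj_fiber_eq_of_isConj {y z : H} (hyz : IsConj y z) (x : H) :
    Nat.card {g | g * z * g⁻¹ = x} = Nat.card {g | g * y * g⁻¹ = x} := by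
  obtain ⟨w, rfl⟩ := isConj_iff.1 hyz
  exact Nat.card_congr ((Equiv.mulRight w).subtypeEquiv fun g ↦ by simp [mul_assoc])

theorem sum_card_conj_fiber [Fintype H] [DecidableEq (ConjClasses H)] (ψ : H ≃* H)
    (c : ConjClasses H) :
    ∑ x with ConjClasses.mk x = c, Nat.card {g | g * ψ x * g⁻¹ = x} =
      if c.map (ψ : H →* H) = c then Nat.card H else 0 := by
  classical
  split_ifs with hc
  · obtain ⟨y, rfl⟩ := c.exists_rep
    calc ∑ x with ConjClasses.mk x = ConjClasses.mk y, Nat.card {g | g * ψ x * g⁻¹ = x}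
      _ = ∑ x with ConjClasses.mk x = ConjClasses.mk y, Nat.card {g | g * y * g⁻¹ = x} := by
        refine Finset.sum_congr rfl fun x hx ↦ card_conj_fiber_eq_of_isConj ?_ x
        have hx' : ConjClasses.mk x = ConjClasses.mk y := (Finset.mem_filter.1 hx).2
        refine ConjClasses.mk_eq_mk_iff_isConj.1 ?_
        rw [← hc, ← hx']
        rfl
      _ = Nat.card H := by
        rw [Nat.card_eq_fintype_card, ← Finset.card_univ,
          Finset.card_eq_sum_card_fiberwise (f := fun g ↦ g * y * g⁻¹)
            (t := {x | ConjClasses.mk x = ConjClasses.mk y})]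
        · simp [Nat.card_eq_fintype_card, Fintype.card_subtype]
        · intro g _
          simpa using ConjClasses.mk_eq_mk_iff_isConj.2 (isConj_iff.2 ⟨g, rfl⟩).symm
  · refine Finset.sum_eq_zero fun x hx ↦ ?_
    obtain rfl : ConjClasses.mk x = c := (Finset.mem_filter.1 hx).2
    have : IsEmpty {g | g * ψ x * g⁻¹ = x} := by
      refine ⟨fun g ↦ hc (ConjClasses.mk_eq_mk_iff_isConj.2 (isConj_iff.2 ⟨g, g.2⟩))⟩
    exact Nat.card_of_isEmpty

theorem card_quot_twistedConj [Finite H] (ψ : H ≃* H) :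
    Nat.card (Quot (TwistedConj ψ)) =
      Nat.card {c : ConjClasses H // c.map (ψ : H →* H) = c} := by
  classical
  have := Fintype.ofFinite H
  have := Fintype.ofFinite (ConjClasses H)
  refine Nat.eq_of_mul_eq_mul_right (Nat.card_pos (α := H)) ?_
  let := twistedAction ψ
  calc Nat.card (Quot (TwistedConj ψ)) * Nat.card H
    _ = Nat.card (MulAction.orbitRel.Quotient H H) * Nat.card H := by
      rw [← orbitRel_twistedAction]
      rfl
    _ = ∑ x, Nat.card {g | g * ψ x * g⁻¹ = x} := by
      rw [← Nat.card_prod, ← Nat.card_congr (MulAction.sigmaFixedByEquivOrbitsProdGroup H H),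
        Nat.card_sigma]
      simp_rw [fixedBy_twistedAction]
    _ = ∑ c, ∑ x with ConjClasses.mk x = c, Nat.card {g | g * ψ x * g⁻¹ = x} :=
      (Finset.sum_fiberwise _ _ _).symm
    _ = Nat.card {c : ConjClasses H // c.map (ψ : H →* H) = c} * Nat.card H := by
      simp_rw [sum_card_conj_fiber, Finset.sum_ite, Finset.sum_const_zero, add_zero,
        Finset.sum_const, smul_eq_mul, Nat.card_eq_fintype_card, Fintype.card_subtype]

theorem card_le_card_quot_twistedConj {E ι : Type*} [Group E] (ψ : E ≃* E)
    [Finite (Quot (TwistedConj ψ))] {K : Subgroup E} [K.Normal] [K.FiniteIndex]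
    (hK : K.map (ψ : E →* E) = K) (g : ι → E)
    (hstable : ∀ i, IsConj (g i : E ⧸ K) (ψ (g i) : E))
    (hinj : ∀ i j, IsConj (g i : E ⧸ K) (g j) → i = j) :
    Nat.card ι ≤ Nat.card (Quot (TwistedConj ψ)) := by
  let ψK : E ⧸ K ≃* E ⧸ K := QuotientGroup.congr K K ψ hK
  calc Nat.card ι
    _ ≤ Nat.card {c : ConjClasses (E ⧸ K) // c.map (ψK : E ⧸ K →* E ⧸ K) = c} :=
      Nat.card_le_card_of_injective
        (fun i ↦ ⟨ConjClasses.mk (g i), ConjClasses.mk_eq_mk_iff_isConj.2 (hstable i).symm⟩)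
        fun i j hij ↦ hinj i j (ConjClasses.mk_eq_mk_iff_isConj.1 (Subtype.ext_iff.1 hij))
    _ = Nat.card (Quot (TwistedConj ψK)) := (card_quot_twistedConj ψK).symm
    _ ≤ Nat.card (Quot (TwistedConj ψ)) := by
      have hmap (a b : E) : TwistedConj ψ a b → TwistedConj ψK (a : E ⧸ K) b := by
        rintro ⟨x, rfl⟩
        exact ⟨x, rfl⟩
      refine Nat.card_le_card_of_surjective (Quot.map QuotientGroup.mk hmap) ?_
      rintro ⟨⟨a⟩⟩
      exact ⟨Quot.mk _ a, rfl⟩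

end InvariantConjClasses

section CharacteristicKernels

instance finite_monoidHom (G X : Type*) [Group G] [Group X] [hG : Group.FG G] [Finite X] :
    Finite (G →* X) := by
  obtain ⟨T, hT⟩ := Group.fg_def.1 hG
  exact Finite.of_injective (fun (f : G →* X) (t : T) ↦ f t) fun f g hfg ↦
    MonoidHom.eq_of_eqOn_dense hT fun t ht ↦ congrFun hfg ⟨t, ht⟩

/-- The intersection of the kernels of all homomorphisms from `G` to `X`. If `G` is finitely
generated and `X` is finite, it is a characteristic subgroup of finite index. -/
def homKernel (G X : Type*) [Group G] [Group X] : Subgroup G :=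
  ⨅ f : G →* X, f.ker

instance homKernel_characteristic (G X : Type*) [Group G] [Group X] :
    (homKernel G X).Characteristic := by
  refine Subgroup.characteristic_iff_le_comap.2 fun φ ↦ ?_
  rw [homKernel, Subgroup.comap_iInf]
  exact le_iInf fun f ↦ iInf_le (fun f : G →* X ↦ f.ker) (f.comp φ.toMonoidHom)

instance homKernel_finiteIndex (G X : Type*) [Group G] [Group X] [Group.FG G] [Finite X] :
    (homKernel G X).FiniteIndex :=
  Subgroup.finiteIndex_iInf fun _ ↦ inferInstance

end CharacteristicKernels

section NonabelianMaximalNormal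

variable {E : Type*} [Group E]

/-- A normal subgroup with nonabelian simple quotient, described inside the lattice of normal
subgroups. -/
structure NonabelianMaximalNormal (N : Subgroup E) : Prop where
  normal : N.Normal
  eq_or_eq_top (A : Subgroup E) : A.Normal → N ≤ A → A = N ∨ A = ⊤
  not_commutator_le : ¬ commutator E ≤ N

theorem nonabelianMaximalNormal_ker {L : Type*} [Group L] [IsSimpleGroup L]
    (hL : commutator L = ⊤) {π : E →* L} (hπ : Surjective π) : NonabelianMaximalNormal π.ker where
  normal := inferInstance
  eq_or_eq_top A hA hle := by
    rw [← Subgroup.comap_map_eq_self hle]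
    rcases (hA.map π hπ).eq_bot_or_eq_top with h | h <;> simp [h]
  not_commutator_le h := by
    rw [← Subgroup.map_eq_bot_iff, commutator_def, Subgroup.map_commutator,
      Subgroup.map_top_of_surjective π hπ, ← commutator_def, hL] at h
    exact top_ne_bot h

namespace NonabelianMaximalNormal

variable {N : Subgroup E}

theorem sup_eq_top (hN : NonabelianMaximalNormal N) {A : Subgroup E} [A.Normal]
    (hAN : ¬ A ≤ N) : A ⊔ N = ⊤ :=
  have := hN.normal
  (hN.eq_or_eq_top (A ⊔ N) inferInstance le_sup_right).resolve_left (sup_eq_right.not.2 hAN)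

theorem eq_of_le (hN : NonabelianMaximalNormal N) {A : Subgroup E}
    (hA : NonabelianMaximalNormal A) (hle : N ≤ A) : A = N :=
  (hN.eq_or_eq_top A hA.normal hle).resolve_right fun h ↦ hA.not_commutator_le (h ▸ le_top)

theorem le_or_le_of_inf_le (hN : NonabelianMaximalNormal N) {A B : Subgroup E} [A.Normal]
    [B.Normal] (hAB : A ⊓ B ≤ N) : A ≤ N ∨ B ≤ N := by
  by_contra! h
  have := hN.normal
  let π := QuotientGroup.mk' N
  have map_eq_top {C : Subgroup E} [C.Normal] (hC : ¬ C ≤ N) : C.map π = ⊤ := by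
    rw [← sup_bot_eq (C.map π), ← QuotientGroup.map_mk'_self N, ← Subgroup.map_sup,
      hN.sup_eq_top hC, Subgroup.map_top_of_surjective π (QuotientGroup.mk'_surjective N)]
  refine hN.not_commutator_le ?_
  rw [← QuotientGroup.ker_mk' N, ← Subgroup.map_eq_bot_iff, commutator_def,
    Subgroup.map_commutator, Subgroup.map_top_of_surjective π (QuotientGroup.mk'_surjective N)]
  nth_rewrite 1 [← map_eq_top h.1]
  rw [← map_eq_top h.2, ← Subgroup.map_commutator, Subgroup.map_eq_bot_iff, QuotientGroup.ker_mk']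
  exact (Subgroup.commutator_le_inf A B).trans hAB

theorem normal_iInf {T : Finset (Subgroup E)} (hT : ∀ A ∈ T, NonabelianMaximalNormal A) :
    (⨅ A ∈ T, A).Normal :=
  Subgroup.normal_iInf_normal fun A ↦ Subgroup.normal_iInf_normal fun hA ↦ (hT A hA).normal

theorem mem_of_iInf_le (hN : NonabelianMaximalNormal N) {T : Finset (Subgroup E)}
    (hT : ∀ A ∈ T, NonabelianMaximalNormal A) (hle : ⨅ A ∈ T, A ≤ N) : N ∈ T := by
  classical
  induction T using Finset.induction_on with
  | empty =>
    have hN_top : N = ⊤ := by simpa using hle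
    exact absurd (hN_top ▸ le_top) hN.not_commutator_le
  | insert A T _ ih =>
    have := (hT A (by simp)).normal
    have := normal_iInf fun B hB ↦ hT B (Finset.mem_insert_of_mem hB)
    rw [Finset.iInf_insert] at hle
    rcases hN.le_or_le_of_inf_le hle with h | h
    · rw [(hT A (by simp)).eq_of_le hN h]
      exact Finset.mem_insert_self A T
    · exact Finset.mem_insert_of_mem (ih (fun B hB ↦ hT B (Finset.mem_insert_of_mem hB)) h)

theorem exists_forall_inv_mul_mem {T : Finset (Subgroup E)}
    (hT : ∀ N ∈ T, NonabelianMaximalNormal N) (τ : Subgroup E → E) :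
    ∃ g, ∀ N ∈ T, (τ N)⁻¹ * g ∈ N := by
  classical
  induction T using Finset.induction_on with
  | empty => simp
  | insert N T hNT ih =>
    have hT' : ∀ A ∈ T, NonabelianMaximalNormal A := fun A hA ↦ hT A (Finset.mem_insert_of_mem hA)
    have hN := hT N (Finset.mem_insert_self N T)
    have := normal_iInf hT'
    obtain ⟨g, hg⟩ := ih hT'
    have hsup : (⨅ A ∈ T, A) ⊔ N = ⊤ := hN.sup_eq_top fun h ↦ hNT (hN.mem_of_iInf_le hT' h)
    obtain ⟨k, hk, n, hn, hkn⟩ := Subgroup.mem_sup_of_normal_left.1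
      (hsup ▸ Subgroup.mem_top (g⁻¹ * τ N) : g⁻¹ * τ N ∈ (⨅ A ∈ T, A) ⊔ N)
    refine ⟨g * k, Finset.forall_mem_insert .. |>.2 ⟨?_, fun A hA ↦ ?_⟩⟩
    · have : (τ N)⁻¹ * (g * k) = n⁻¹ := by
        rw [eq_inv_mul_iff_mul_eq, ← mul_assoc] at hkn
        simp [← hkn, mul_assoc]
      exact this ▸ inv_mem hn
    · rw [← mul_assoc]
      exact mul_mem (hg A hA) ((iInf₂_le A hA : ⨅ B ∈ T, B ≤ A) hk)

end NonabelianMaximalNormal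

end NonabelianMaximalNormal

section AlternatingGroups

/-- The alternating group on `n` letters. -/
abbrev Alt (n : ℕ) := alternatingGroup (Fin n)

theorem commutator_alt {n : ℕ} (hn : 5 ≤ n) : commutator (Alt n) = ⊤ :=
  commutator_alternatingGroup_eq_top (by simpa using hn)

theorem isSimpleGroup_alt {n : ℕ} (hn : 5 ≤ n) : IsSimpleGroup (Alt n) :=
  alternatingGroup.isSimpleGroup (by simpa using hn)

theorem two_mul_card_alt {n : ℕ} (hn : 2 ≤ n) : 2 * Nat.card (Alt n) = n.factorial := by
  have : Nontrivial (Fin n) := Fin.nontrivial_iff_two_le.2 hn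
  rw [two_mul_nat_card_alternatingGroup, Nat.card_perm, Nat.card_fin]

theorem card_alt_inj {m n : ℕ} (hm : 2 ≤ m) (hn : 2 ≤ n)
    (h : Nat.card (Alt m) = Nat.card (Alt n)) : m = n := by
  rw [← Nat.factorial_inj hm, ← two_mul_card_alt hm, ← two_mul_card_alt hn, h]

theorem exists_orderOf_eq_alt {p : ℕ} (hp : p.Prime) (hp2 : p ≠ 2) :
    ∃ a : Alt (p + 2), orderOf a = p := by
  have : Fact p.Prime := ⟨hp⟩
  have hcoprime : p.Coprime 2 := (Nat.coprime_primes hp Nat.prime_two).2 hp2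
  refine exists_prime_orderOf_dvd_card' p (hcoprime.dvd_of_dvd_mul_left ?_)
  rw [two_mul_card_alt (by lia)]
  exact Nat.dvd_factorial hp.pos (by lia)

theorem cycleType_eq_of_orderOf_eq_alt {p : ℕ} (hp : p.Prime) (hp3 : 3 ≤ p) {a : Alt (p + 2)}
    (ha : orderOf a = p) : (a : Equiv.Perm (Fin (p + 2))).cycleType = {p} := by
  rw [← Subgroup.orderOf_coe] at ha
  obtain ⟨n, hn⟩ := Equiv.Perm.cycleType_prime_order (ha ▸ hp)
  have hle := Finset.card_le_univ (a : Equiv.Perm (Fin (p + 2))).support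
  rw [← Equiv.Perm.sum_cycleType, hn, ha, Multiset.sum_replicate, smul_eq_mul,
    Fintype.card_fin] at hle
  obtain rfl : n = 0 := by
    by_contra hne
    nlinarith [Nat.pos_of_ne_zero hne]
  simpa [ha] using hn

theorem isConj_alt_of_orderOf_eq {p : ℕ} (hp : p.Prime) (hp3 : 3 ≤ p) {a b : Alt (p + 2)}
    (ha : orderOf a = p) (hb : orderOf b = p) : IsConj a b := by
  have hca := cycleType_eq_of_orderOf_eq_alt hp hp3 ha
  have hcb := cycleType_eq_of_orderOf_eq_alt hp hp3 hb
  refine alternatingGroup.isConj_of (Equiv.Perm.isConj_iff_cycleType_eq.2 (hca.trans hcb.symm)) ?_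
  simp [← Equiv.Perm.sum_cycleType, hca]

end AlternatingGroups

section AlternatingQuotients

variable {E : Type*} [Group E]

/-- The kernels of the surjections of `E` onto alternating groups of degree `p + 2` with `p ∈ P`.
The shift makes all elements of prime order `p ≥ 3` conjugate in the quotient. -/
def altKernels (E : Type*) [Group E] (P : Finset ℕ) : Set (Subgroup E) :=
  {N | ∃ p ∈ P, ∃ π : E →* Alt (p + 2), Surjective π ∧ π.ker = N}

/-- The intersection of the kernels of the surjections of `E` onto alternating groups of degree
`p + 2` with `p ∈ P`. -/
def altRadical (E : Type*) [Group E] (P : Finset ℕ) : Subgroup E :=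
  sInf (altKernels E P)

variable {P : Finset ℕ}

theorem mem_altRadical {x : E} :
    x ∈ altRadical E P ↔ ∀ p ∈ P, ∀ π : E →* Alt (p + 2), Surjective π → π x = 1 := by
  rw [altRadical, Subgroup.mem_sInf]
  refine ⟨fun h p hp π hπ ↦ h _ ⟨p, hp, π, hπ, rfl⟩, ?_⟩
  rintro h _ ⟨p, hp, π, hπ, rfl⟩
  exact h p hp π hπ

instance altRadical_characteristic : (altRadical E P).Characteristic :=
  Subgroup.characteristic_iff_le_comap.2 fun φ _ hx ↦
    mem_altRadical.2 fun p hp π hπ ↦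
      mem_altRadical.1 hx p hp (π.comp φ.toMonoidHom) (hπ.comp φ.surjective)

theorem finite_altKernels [Group.FG E] : (altKernels E P).Finite := by
  refine (P.finite_toSet.biUnion fun p _ ↦
    Set.finite_range fun π : E →* Alt (p + 2) ↦ π.ker).subset ?_
  rintro _ ⟨p, hp, π, _, rfl⟩
  exact Set.mem_biUnion hp ⟨π, rfl⟩

instance altRadical_finiteIndex [Group.FG E] : (altRadical E P).FiniteIndex := by
  have := (finite_altKernels (E := E) (P := P)).to_subtype
  rw [altRadical, sInf_eq_iInf']
  refine Subgroup.finiteIndex_iInf ?_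
  rintro ⟨_, p, _, π, _, rfl⟩
  exact Subgroup.finiteIndex_ker π

theorem nonabelianMaximalNormal_of_mem_altKernels (hP : ∀ p ∈ P, 3 ≤ p) {N : Subgroup E}
    (hN : N ∈ altKernels E P) : NonabelianMaximalNormal N := by
  obtain ⟨p, hp, π, hπ, rfl⟩ := hN
  have hp5 : 5 ≤ p + 2 := by linarith [hP p hp]
  have := isSimpleGroup_alt hp5
  exact nonabelianMaximalNormal_ker (commutator_alt hp5) hπ

theorem exists_forall_map_eq_map [Group.FG E] (hP : ∀ p ∈ P, 3 ≤ p) (τ : Subgroup E → E) :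
    ∃ x : E, ∀ p ∈ P, ∀ π : E →* Alt (p + 2), Surjective π → π x = π (τ π.ker) := by
  obtain ⟨x, hx⟩ := NonabelianMaximalNormal.exists_forall_inv_mul_mem
    (T := finite_altKernels.toFinset)
    (fun N hN ↦ nonabelianMaximalNormal_of_mem_altKernels hP (by simpa using hN)) τ
  refine ⟨x, fun p hp π hπ ↦ ?_⟩
  have : (τ π.ker)⁻¹ * x ∈ π.ker :=
    hx π.ker (finite_altKernels.mem_toFinset.2 ⟨p, hp, π, hπ, rfl⟩)
  exact (MonoidHom.eq_iff π).2 this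

/-- Among the alternating quotients of degree `q + 2` with `q ∈ P`, the image of `g` has order `p`
in those of degree `p + 2` and is trivial in the others. -/
def IsolatesPrime (P : Finset ℕ) (p : ℕ) (g : E) : Prop :=
  ∀ q ∈ P, ∀ π : E →* Alt (q + 2), Surjective π → orderOf (π g) = if q = p then q else 1

theorem IsolatesPrime.map {p : ℕ} {g : E} (hg : IsolatesPrime P p g) (ψ : E ≃* E) :
    IsolatesPrime P p (ψ g) :=
  fun q hq π hπ ↦ hg q hq (π.comp ψ.toMonoidHom) (hπ.comp ψ.surjective)

theorem degree_eq_of_ker_eq {p q : ℕ} {π : E →* Alt (p + 2)} {ρ : E →* Alt (q + 2)}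
    (hπ : Surjective π) (hρ : Surjective ρ) (h : π.ker = ρ.ker) : p = q := by
  have hindex : π.ker.index = ρ.ker.index := by rw [h]
  rw [Subgroup.index_ker, Subgroup.index_ker, MonoidHom.range_eq_top.2 hπ,
    MonoidHom.range_eq_top.2 hρ, Subgroup.card_top, Subgroup.card_top] at hindex
  simpa using card_alt_inj le_add_self le_add_self hindex

theorem orderOf_map_eq_of_ker_eq {L L' : Type*} [Group L] [Group L'] {π : E →* L} {ρ : E →* L'}
    (h : π.ker = ρ.ker) (x : E) : orderOf (π x) = orderOf (ρ x) :=
  orderOf_eq_orderOf_iff.2 fun n ↦ by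
    rw [← map_pow, ← map_pow, ← MonoidHom.mem_ker, ← MonoidHom.mem_ker, h]

theorem exists_isolatesPrime [Group.FG E] (hP : ∀ p ∈ P, p.Prime ∧ 3 ≤ p) (p : ℕ) :
    ∃ g : E, IsolatesPrime P p g := by
  have exists_local (N : Subgroup E) : ∃ x : E, ∀ q ∈ P, ∀ π : E →* Alt (q + 2), Surjective π →
      π.ker = N → orderOf (π x) = if q = p then q else 1 := by
    by_cases hN : ∃ ρ : E →* Alt (p + 2), p ∈ P ∧ Surjective ρ ∧ ρ.ker = N
    · obtain ⟨ρ, hp, hρ, rfl⟩ := hN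
      obtain ⟨a, ha⟩ := exists_orderOf_eq_alt (hP p hp).1 (by linarith [(hP p hp).2])
      obtain ⟨x, rfl⟩ := hρ a
      refine ⟨x, fun q _ π hπ hker ↦ ?_⟩
      obtain rfl := degree_eq_of_ker_eq hπ hρ hker
      rw [orderOf_map_eq_of_ker_eq hker, ha, if_pos rfl]
    · refine ⟨1, fun q hq π hπ hker ↦ ?_⟩
      rw [map_one, orderOf_one, if_neg]
      rintro rfl
      exact hN ⟨π, hq, hπ, hker⟩
  choose τ hτ using exists_local
  obtain ⟨g, hg⟩ := exists_forall_map_eq_map (fun q hq ↦ (hP q hq).2) τ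
  exact ⟨g, fun q hq π hπ ↦ hg q hq π hπ ▸ hτ π.ker q hq π hπ rfl⟩

theorem IsolatesPrime.isConj_mod_altRadical [Group.FG E] (hP : ∀ p ∈ P, p.Prime ∧ 3 ≤ p) {p : ℕ}
    {g h : E} (hg : IsolatesPrime P p g) (hh : IsolatesPrime P p h) :
    IsConj (g : E ⧸ altRadical E P) h := by
  have isConj_local (q) (hq : q ∈ P) (π : E →* Alt (q + 2)) (hπ : Surjective π) :
      IsConj (π g) (π h) := by
    have hgq := hg q hq π hπ
    have hhq := hh q hq π hπ
    split_ifs at hgq hhq with hqp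
    · exact isConj_alt_of_orderOf_eq (hP q hq).1 (hP q hq).2 hgq hhq
    · rw [orderOf_eq_one_iff.1 hgq, orderOf_eq_one_iff.1 hhq]
  have exists_local (N : Subgroup E) : ∃ x : E, N ∈ altKernels E P → h⁻¹ * (x * g * x⁻¹) ∈ N := by
    by_cases hN : N ∈ altKernels E P
    · obtain ⟨q, hq, π, hπ, rfl⟩ := hN
      obtain ⟨y, hy⟩ := isConj_iff.1 (isConj_local q hq π hπ)
      obtain ⟨x, rfl⟩ := hπ y
      exact ⟨x, fun _ ↦ (MonoidHom.eq_iff π).1 (by simpa using hy)⟩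
    · exact ⟨1, fun h ↦ absurd h hN⟩
  choose τ hτ using exists_local
  obtain ⟨x, hx⟩ := exists_forall_map_eq_map (fun q hq ↦ (hP q hq).2) τ
  refine isConj_iff.2 ⟨x, (QuotientGroup.eq.2 (mem_altRadical.2 fun q hq π hπ ↦ ?_)).symm⟩
  have := (MonoidHom.eq_iff π).2 (hτ π.ker ⟨q, hq, π, hπ, rfl⟩)
  simp [hx q hq π hπ, ← this, mul_assoc]

theorem IsolatesPrime.eq_of_isConj_mod_altRadical {p q : ℕ} {g h : E} (hp : IsolatesPrime P p g)
    (hq : IsolatesPrime P q h) (hqP : q ∈ P) (hq1 : q ≠ 1) {π : E →* Alt (q + 2)}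
    (hπ : Surjective π) (hconj : IsConj (g : E ⧸ altRadical E P) h) : p = q := by
  have hker : altRadical E P ≤ π.ker := fun x hx ↦ mem_altRadical.1 hx q hqP π hπ
  have hconj' : IsConj (π g) (π h) := (QuotientGroup.lift _ π hker).map_isConj hconj
  obtain ⟨y, hy⟩ := isConj_iff.1 hconj'
  have horder : orderOf (π g) = orderOf (π h) := by
    rw [← hy, ← MulAut.conj_apply, MulEquiv.orderOf_eq]
  rw [hp q hqP π hπ, hq q hqP π hπ, if_pos rfl, ite_eq_left_iff] at horder
  by_contra hne
  exact hq1 (horder (Ne.symm hne)).symm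

theorem card_le_card_quot_twistedConj_of_alt [Group.FG E] (hP : ∀ p ∈ P, p.Prime ∧ 3 ≤ p)
    (hE : ∀ p ∈ P, ∃ π : E →* Alt (p + 2), Surjective π) (ψ : E ≃* E)
    [Finite (Quot (TwistedConj ψ))] : P.card ≤ Nat.card (Quot (TwistedConj ψ)) := by
  choose g hg using exists_isolatesPrime (E := E) hP
  rw [← Nat.card_eq_finsetCard]
  refine card_le_card_quot_twistedConj ψ
    (Subgroup.characteristic_iff_map_eq.1 (altRadical_characteristic (P := P)) ψ)
    (fun p : P ↦ g p) (fun p ↦ (hg p).isConj_mod_altRadical hP ((hg p).map ψ)) fun p q hpq ↦ ?_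
  obtain ⟨π, hπ⟩ := hE q q.2
  exact Subtype.ext
    ((hg p).eq_of_isConj_mod_altRadical (hg q) q.2 (hP q q.2).1.ne_one hπ hpq)

theorem reidemeisterInfinite_of_alt [Group.FG E]
    (hE : ∀ n, 5 ≤ n → ∃ π : E →* Alt n, Surjective π) (ψ : E ≃* E) : ReidemeisterInfinite ψ := by
  by_contra h
  have : Finite (Quot (TwistedConj ψ)) := not_infinite_iff_finite.1 h
  have hprimes := Nat.infinite_setOfPred_prime.sdiff (Set.finite_lt_nat 3)
  obtain ⟨P, hP, hcard⟩ := hprimes.exists_subset_card_eq (Nat.card (Quot (TwistedConj ψ)) + 1)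
  have hP' (p) (hp : p ∈ P) : p.Prime ∧ 3 ≤ p := ⟨(hP hp).1, not_lt.1 (hP hp).2⟩
  have := card_le_card_quot_twistedConj_of_alt hP'
    (fun p hp ↦ hE (p + 2) (by linarith [(hP' p hp).2])) ψ
  lia

end AlternatingQuotients

section FreeGroups

theorem freeGroup_commute_of_subsingleton {X : Type*} [Subsingleton X] (a b : FreeGroup X) :
    Commute a b := by
  have conj_eq_one : (MulAut.conj : FreeGroup X →* MulAut (FreeGroup X)) = 1 := by
    refine FreeGroup.ext_hom _ _ fun x ↦ MulEquiv.toMonoidHom_injective ?_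
    refine FreeGroup.ext_hom _ _ fun y ↦ ?_
    simp [Subsingleton.elim x y]
  have := DFunLike.congr_fun (DFunLike.congr_fun conj_eq_one a) b
  rwa [MulAut.conj_apply, mul_inv_eq_iff_eq_mul] at this

theorem exists_surjective_freeGroup_bool (X : Type*) [Nontrivial X] :
    ∃ f : FreeGroup X →* FreeGroup Bool, Surjective f := by
  classical
  obtain ⟨x, y, hxy⟩ := exists_pair_ne X
  refine ⟨FreeGroup.map fun z ↦ decide (z = x), FreeGroup.map_surjective ?_⟩
  rintro (_ | _)
  exacts [⟨y, by simp [hxy.symm]⟩, ⟨x, by simp⟩]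

theorem exists_surjective_of_not_commute {C D : Type*} [Group C] (f : C →* FreeGroup D) {a b : C}
    (hab : ¬ Commute (f a) (f b)) : ∃ g : C →* FreeGroup Bool, Surjective g := by
  let e := IsFreeGroup.toFreeGroup f.range
  have : Nontrivial (IsFreeGroup.Generators f.range) := by
    by_contra h
    rw [not_nontrivial_iff_subsingleton] at h
    have hcomm := (freeGroup_commute_of_subsingleton (e (f.rangeRestrict a))
      (e (f.rangeRestrict b))).map e.symm
    simp only [MulEquiv.symm_apply_apply] at hcomm
    exact hab (hcomm.map f.range.subtype)
  obtain ⟨g, hg⟩ := exists_surjective_freeGroup_bool (IsFreeGroup.Generators f.range)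
  exact ⟨g.comp (e.toMonoidHom.comp f.rangeRestrict),
    hg.comp (e.surjective.comp f.rangeRestrict_surjective)⟩

theorem prod_map_of_injective (X : Type*) :
    Injective fun l : List X ↦ (l.map FreeGroup.of).prod := by
  classical
  have prod_eq_mk (l : List X) : (l.map FreeGroup.of).prod = FreeGroup.mk (l.map (·, true)) := by
    induction l with
    | nil => rfl
    | cons x l ih => rw [List.map_cons, List.prod_cons, ih]; rfl
  intro l₁ l₂ h
  have isReduced (l : List X) : FreeGroup.IsReduced (l.map (·, true)) :=
    (List.pairwise_map.2 (List.pairwise_of_forall fun _ _ _ ↦ rfl)).isChain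
  have := congrArg FreeGroup.toWord h
  simp only [prod_eq_mk, FreeGroup.toWord_mk, (isReduced _).reduce_eq] at this
  exact List.map_injective_iff.2 (fun _ _ h ↦ (Prod.mk.inj h).1) this

theorem not_commute_pow_of {X : Type*} {x y : X} (hxy : x ≠ y) {n : ℕ} (hn : n ≠ 0) :
    ¬ Commute (FreeGroup.of x ^ n) (FreeGroup.of y ^ n) := by
  intro h
  obtain ⟨n, rfl⟩ := Nat.exists_eq_succ_of_ne_zero hn
  have := prod_map_of_injective X (a₁ := List.replicate (n + 1) x ++ List.replicate (n + 1) y)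
    (a₂ := List.replicate (n + 1) y ++ List.replicate (n + 1) x) (by simpa using h.eq)
  simp [List.replicate_succ, hxy] at this

theorem not_commute_of_mul_of {X : Type*} {a b c d : X} (h : a ≠ c) :
    ¬ Commute (FreeGroup.of a * FreeGroup.of b) (FreeGroup.of c * FreeGroup.of d) := by
  intro hcomm
  have := prod_map_of_injective X (a₁ := [a, b, c, d]) (a₂ := [c, d, a, b])
    (by simpa [mul_assoc] using hcomm.eq)
  exact h (List.cons.inj this).1

theorem exists_surjective_perm_fin (n : ℕ) :
    ∃ π : FreeGroup Bool →* Equiv.Perm (Fin (n + 2)), Surjective π := by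
  let σ := finRotate (n + 2)
  refine ⟨FreeGroup.lift fun b ↦ if b then σ else Equiv.swap 0 (σ 0), ?_⟩
  rw [← MonoidHom.range_eq_top, eq_top_iff, ← Equiv.Perm.closure_cycle_adjacent_swap
    isCycle_finRotate support_finRotate 0, Subgroup.closure_le]
  rintro _ (rfl | rfl)
  · exact ⟨FreeGroup.of true, by simp [σ]⟩
  · exact ⟨FreeGroup.of false, by simp [σ]⟩

end FreeGroups

section LargeGroups

theorem exists_surjective_alt_homKernel {C : Type*} [Group C] {n : ℕ} (hn : 5 ≤ n)
    {π : C →* Equiv.Perm (Fin n)} (hπ : Surjective π) :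
    ∃ ρ : homKernel C ℤˣ →* Alt n, Surjective ρ := by
  have hmem (x : homKernel C ℤˣ) : π x ∈ Alt n := by
    rw [Equiv.Perm.mem_alternatingGroup, ← MonoidHom.comp_apply, ← MonoidHom.mem_ker]
    exact Subgroup.mem_iInf.1 x.2 _
  refine ⟨(π.comp (homKernel C ℤˣ).subtype).codRestrict (Alt n) hmem, ?_⟩
  rintro ⟨y, hy⟩
  have hcomm : _ = Alt n := alternatingGroup.commutator_perm_eq (by simpa using hn)
  rw [← hcomm, commutator_def, ← Subgroup.map_top_of_surjective π hπ, ← Subgroup.map_commutator,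
    ← commutator_def] at hy
  obtain ⟨c, hc, rfl⟩ := hy
  exact ⟨⟨c, Subgroup.mem_iInf.2 fun f ↦ Abelianization.commutator_subset_ker f hc⟩, rfl⟩

/-- A group is large if a subgroup of finite index surjects onto a nonabelian free group. -/
def IsLargeGroup (G : Type*) [Group G] : Prop :=
  ∃ Γ : Subgroup G, Γ.FiniteIndex ∧ ∃ f : Γ →* FreeGroup Bool, Surjective f

variable {G : Type*} [Group G]

theorem exists_surjective_of_le {Γ C : Subgroup G} [C.Normal] [C.FiniteIndex] (hC : C ≤ Γ)
    {f : Γ →* FreeGroup Bool} (hf : Surjective f) : ∃ g : C →* FreeGroup Bool, Surjective g := by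
  obtain ⟨a, ha⟩ := hf (FreeGroup.of true)
  obtain ⟨b, hb⟩ := hf (FreeGroup.of false)
  have hpow (c : Γ) : ∃ d : C, Subgroup.inclusion hC d = c ^ C.index :=
    ⟨⟨_, C.pow_index_mem (c : G)⟩, rfl⟩
  obtain ⟨a', ha'⟩ := hpow a
  obtain ⟨b', hb'⟩ := hpow b
  refine exists_surjective_of_not_commute (f.comp (Subgroup.inclusion hC)) (a := a') (b := b') ?_
  simpa [ha', hb', ha, hb] using
    not_commute_pow_of Bool.false_ne_true.symm (Subgroup.FiniteIndex.index_ne_zero (H := C))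

theorem IsLargeGroup.propertyRInfinity [Group.FG G] (hG : IsLargeGroup G) :
    PropertyRInfinity G := by
  obtain ⟨Γ, _, f, hf⟩ := hG
  intro φ
  by_contra h
  have : Finite (Quot (TwistedConj φ)) := not_infinite_iff_finite.1 h
  let C := homKernel G (Equiv.Perm (G ⧸ Γ))
  have hC : C ≤ Γ := (iInf_le _ (MulAction.toPermHom G (G ⧸ Γ))).trans
    (Γ.normalCore_eq_ker ▸ Γ.normalCore_le)
  have : Group.FG C := Subgroup.fg_of_index_ne_zero C
  let E := homKernel C ℤˣ
  have : Group.FG E := Subgroup.fg_of_index_ne_zero E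
  have hfinC := finite_twistedConj_characteristicRestrict φ C
  have hfinE := finite_twistedConj_characteristicRestrict (characteristicRestrict φ C) E
  refine not_infinite_iff_finite.2 hfinE (reidemeisterInfinite_of_alt (fun n hn ↦ ?_) _)
  obtain ⟨g, hg⟩ := exists_surjective_of_le hC hf
  obtain ⟨m, rfl⟩ := Nat.exists_eq_add_of_le' ((by norm_num : 2 ≤ 5).trans hn)
  obtain ⟨π, hπ⟩ := exists_surjective_perm_fin m
  exact exists_surjective_alt_homKernel hn (π := π.comp g) (hπ.comp hg)

end LargeGroups

section ChebyshevRecurrence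

open Polynomial Polynomial.Chebyshev

variable {R : Type*} [CommRing R]

theorem eq_zero_of_linear_recurrence {c : R} {f : ℤ → R}
    (hf : ∀ n, f (n + 2) = c * f (n + 1) - f n) {k : ℤ} (h0 : f k = 0) (h1 : f (k + 1) = 0)
    (n : ℤ) : f n = 0 := by
  suffices f n = 0 ∧ f (n + 1) = 0 from this.1
  induction n using Int.inductionOn' (b := k) with
  | zero => exact ⟨h0, h1⟩
  | succ n _ ih => exact ⟨ih.2, by rw [add_assoc, one_add_one_eq_two, hf, ih.1, ih.2]; simp⟩
  | pred n _ ih =>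
    have := hf (n - 1)
    rw [sub_add_cancel, show n - 1 + 2 = n + 1 by ring, ih.1, ih.2] at this
    exact ⟨by simpa using this, by simpa using ih.1⟩

theorem eval_S_add_two (c : R) (n : ℤ) :
    (S R (n + 2)).eval c = c * (S R (n + 1)).eval c - (S R n).eval c := by
  simp [S_add_two]

theorem eval_S_sub_two_sub {c : R} {m : ℤ} (h1 : (S R (m - 1)).eval c = 0)
    (h2 : (S R (m - 2)).eval c = 1) (j : ℤ) :
    (S R (m - 2 - j)).eval c = (S R j).eval c := by
  refine sub_eq_zero.1 (eq_zero_of_linear_recurrence (c := c) (k := -1)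
    (f := fun j ↦ (S R (m - 2 - j)).eval c - (S R j).eval c) (fun n ↦ ?_) ?_ ?_ j)
  · have := eval_S_add_two c (m - 2 - (n + 2))
    rw [show m - 2 - (n + 2) + 2 = m - 2 - n by ring,
      show m - 2 - (n + 2) + 1 = m - 2 - (n + 1) by ring] at this
    rw [eval_S_add_two c n]
    linear_combination this
  · simp [show m - 2 - -1 = m - 1 by ring, h1]
  · simp [h2]

theorem eval_S_sub_sub_one_eq_zero {c : R} {i j : ℤ} (h : (S R i).eval c = (S R j).eval c)
    (h' : (S R (i - 1)).eval c = (S R (j - 1)).eval c) : (S R (j - i - 1)).eval c = 0 := by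
  have := eq_zero_of_linear_recurrence (c := c) (k := i - 1)
    (f := fun n ↦ (S R (n + (j - i))).eval c - (S R n).eval c) (fun n ↦ ?_) ?_ ?_ (-1)
  · simpa [show -1 + (j - i) = j - i - 1 by ring] using this
  · rw [add_right_comm n 2, add_right_comm n 1, eval_S_add_two, eval_S_add_two]
    ring
  · rw [show i - 1 + (j - i) = j - 1 by ring, h', sub_self]
  · rw [show i - 1 + 1 + (j - i) = j by ring, sub_add_cancel, h, sub_self]

theorem eval_S_two_mul_cos (θ : ℝ) (n : ℤ) :
    (S ℝ n).eval (2 * Real.cos θ) * Real.sin θ = Real.sin ((n + 1) * θ) := by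
  rw [← U_real_cos, ← S_comp_two_mul_X]
  simp

theorem sin_pi_div_pos {m : ℕ} (hm : 2 ≤ m) : 0 < Real.sin (Real.pi / m) :=
  Real.sin_pos_of_pos_of_lt_pi (by positivity)
    (div_lt_self Real.pi_pos (by exact_mod_cast hm))

theorem eval_S_sub_one_two_mul_cos_pi_div {m : ℕ} (hm : 2 ≤ m) :
    (S ℝ (m - 1)).eval (2 * Real.cos (Real.pi / m)) = 0 := by
  have hm0 : (m : ℝ) ≠ 0 := by positivity
  refine (mul_eq_zero_iff_right (sin_pi_div_pos hm).ne').1 ?_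
  rw [eval_S_two_mul_cos]
  push_cast
  rw [sub_add_cancel, mul_div_cancel₀ _ hm0, Real.sin_pi]

theorem eval_S_sub_two_two_mul_cos_pi_div {m : ℕ} (hm : 2 ≤ m) :
    (S ℝ (m - 2)).eval (2 * Real.cos (Real.pi / m)) = 1 := by
  have hm0 : (m : ℝ) ≠ 0 := by positivity
  refine mul_right_cancel₀ (sin_pi_div_pos hm).ne' ?_
  rw [eval_S_two_mul_cos, one_mul, ← Real.sin_pi_sub (Real.pi / m)]
  congr 1
  push_cast
  field_simp
  ring

theorem eval_S_two_mul_cos_pi_div_pos {m j : ℕ} (hj : j + 1 < m) :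
    0 < (S ℝ j).eval (2 * Real.cos (Real.pi / m)) := by
  have hm0 : (0 : ℝ) < m := by exact_mod_cast (Nat.zero_le _).trans_lt hj
  refine pos_of_mul_pos_left ?_ (sin_pi_div_pos (m := m) (by lia)).le
  rw [eval_S_two_mul_cos]
  refine Real.sin_pos_of_pos_of_lt_pi (by positivity) ?_
  rw [← mul_div_assoc, div_lt_iff₀ hm0, mul_comm Real.pi]
  push_cast
  exact mul_lt_mul_of_pos_right (by exact_mod_cast hj) Real.pi_pos

end ChebyshevRecurrence

section CartanWeights

open Polynomial Polynomial.Chebyshev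

/-- Off-diagonal entries, up to sign, of a generalized Cartan matrix for the Coxeter matrix `M`:
the weights behave algebraically like `2 cos (π / M s t)`, as far as the Chebyshev polynomials
`S n` (normalized by `S n (2 cos θ) * sin θ = sin ((n + 1) * θ)`) can tell. -/
structure CartanWeights {S : Type*} (M : S → S → ℕ) (R : Type*) [CommRing R] [LinearOrder R] where
  /-- The weight `2 cos (π / M s t)`. -/
  weight : S → S → R
  symm (s t : S) : weight s t = weight t s
  weight_self (s : S) : weight s s = -2
  eval_sub_one {s t : S} : 2 ≤ M s t → (Chebyshev.S R (M s t - 1)).eval (weight s t) = 0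
  eval_sub_two {s t : S} : 2 ≤ M s t → (Chebyshev.S R (M s t - 2)).eval (weight s t) = 1
  eval_pos {s t : S} {j : ℕ} : j + 1 < M s t → 0 < (Chebyshev.S R j).eval (weight s t)

variable {S : Type*} {M : S → S → ℕ}

/-- `2 cos (π / M s t)`. For the label `∞`, encoded as `0`, the convention `x / 0 = 0` gives the
required value `2`. -/
noncomputable def cosWeight (M : S → S → ℕ) (s t : S) : ℝ :=
  2 * Real.cos (Real.pi / M s t)

theorem one_le_cosWeight {s t : S} (h1 : M s t ≠ 1) (h2 : M s t ≠ 2) : 1 ≤ cosWeight M s t := by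
  rcases Nat.eq_zero_or_pos (M s t) with h0 | hpos
  · simp [cosWeight, h0]
  have h3 : (3 : ℝ) ≤ M s t := by exact_mod_cast (by lia : 3 ≤ M s t)
  have : Real.cos (Real.pi / 3) ≤ Real.cos (Real.pi / M s t) :=
    Real.cos_le_cos_of_nonneg_of_le_pi (by positivity) (by linarith [Real.pi_pos])
      (div_le_div_of_nonneg_left Real.pi_pos.le (by norm_num) h3)
  rw [Real.cos_pi_div_three] at this
  rw [cosWeight]
  linarith

/-- The ring generated by all the weights `2 cos (π / M s t)`. -/
abbrev cosRing (M : S → S → ℕ) : Subalgebra ℤ ℝ :=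
  Algebra.adjoin ℤ (Set.range (uncurry (cosWeight M)))

instance finite_cosRing [Finite S] : Module.Finite ℤ (cosRing M) := by
  refine Module.Finite.iff_fg.2 (fg_adjoin_of_finite (Set.finite_range _) ?_)
  rintro _ ⟨⟨s, t⟩, rfl⟩
  have := Real.isIntegral_two_mul_cos_rat_mul_pi (M s t : ℚ)⁻¹
  simpa [cosWeight, div_eq_inv_mul] using this

theorem coe_eval_S (x : cosRing M) (n : ℤ) :
    (↑((Chebyshev.S (cosRing M) n).eval x : cosRing M) : ℝ) = (Chebyshev.S ℝ n).eval (x : ℝ) :=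
  algebraMap_eval_S x n

/-- The weights `2 cos (π / M s t)` of the Tits representation. -/
noncomputable def CartanWeights.cos (hM : IsCoxeterMatrix M) : CartanWeights M (cosRing M) where
  weight s t := ⟨cosWeight M s t, Algebra.subset_adjoin ⟨(s, t), rfl⟩⟩
  symm s t := Subtype.ext (by simp only [cosWeight, hM.1 s t])
  weight_self s := Subtype.ext (by simp [cosWeight, hM.2.1 s]; rfl)
  eval_sub_one h := Subtype.ext <| (coe_eval_S _ _).trans (eval_S_sub_one_two_mul_cos_pi_div h)
  eval_sub_two h := Subtype.ext <| (coe_eval_S _ _).trans (eval_S_sub_two_two_mul_cos_pi_div h)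
  eval_pos h := by
    rw [← Subtype.coe_lt_coe, coe_eval_S]
    exact eval_S_two_mul_cos_pi_div_pos h

theorem CartanWeights.one_le_cos (hM : IsCoxeterMatrix M) {s t : S} (hst : s ≠ t)
    (h2 : M s t ≠ 2) : 1 ≤ (CartanWeights.cos hM).weight s t := by
  rw [← Subtype.coe_le_coe]
  simp only [OneMemClass.coe_one]
  exact one_le_cosWeight (hM.2.2 s t hst) h2

end CartanWeights

section Congruences

variable {R V : Type*} [CommRing R] [AddCommGroup V] [Module R V]

variable (R V) in
/-- The submodule `k V` of multiples of a natural number `k`. -/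
def multiples (k : ℕ) : Submodule R V := (k • (LinearMap.id : V →ₗ[R] V)).range

theorem mem_multiples {k : ℕ} {x : V} : x ∈ multiples R V k ↔ ∃ z : V, k • z = x := Iff.rfl

theorem map_mem_multiples (T : V →ₗ[R] V) {k : ℕ} {x : V} (hx : x ∈ multiples R V k) :
    T x ∈ multiples R V k := by
  obtain ⟨z, rfl⟩ := mem_multiples.1 hx
  exact ⟨T z, by simp⟩

theorem multiples_le_of_dvd {k l : ℕ} (h : k ∣ l) : multiples R V l ≤ multiples R V k := by
  rintro _ ⟨z, rfl⟩
  obtain ⟨m, rfl⟩ := h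
  exact ⟨m • z, by simp⟩

theorem mem_multiples_zero {x : V} : x ∈ multiples R V 0 ↔ x = 0 := by
  simp [mem_multiples, eq_comm]

theorem finite_of_surjective_of_nsmul_eq_zero {V Q : Type*} [AddCommGroup V] [AddCommGroup Q]
    [Module.Finite ℤ V] {f : V →+ Q} (hf : Surjective f) {k : ℕ} (hk : k ≠ 0)
    (h : ∀ q : Q, k • q = 0) : Finite Q := by
  have : Module.Finite ℤ Q := Module.Finite.of_surjective f.toIntLinearMap hf
  refine Module.finite_of_fg_torsion _ fun {q} ↦
    ⟨⟨k, mem_nonZeroDivisors_of_ne_zero (Nat.cast_ne_zero.2 hk)⟩, ?_⟩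
  rw [Submonoid.mk_smul, natCast_zsmul, h]

theorem finite_quotient_multiples [Module.Finite ℤ V] {k : ℕ} (hk : k ≠ 0) :
    Finite (V ⧸ multiples R V k) := by
  refine finite_of_surjective_of_nsmul_eq_zero (f := (multiples R V k).mkQ.toAddMonoidHom)
    (Submodule.mkQ_surjective _) hk fun q ↦ ?_
  obtain ⟨x, rfl⟩ := Submodule.mkQ_surjective _ q
  rw [← map_nsmul, Submodule.mkQ_apply, Submodule.Quotient.mk_eq_zero]
  exact ⟨x, rfl⟩

variable (R) in
theorem exists_notMem_multiples [Module.Free ℤ V] {v : V} (hv : v ≠ 0) :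
    ∃ k ≠ 0, v ∉ multiples R V k := by
  obtain ⟨f, hf⟩ : ∃ f : Module.Dual ℤ V, f v ≠ 0 := by
    by_contra! h
    exact hv ((Module.forall_dual_apply_eq_zero_iff ℤ v).1 h)
  refine ⟨(f v).natAbs + 1, by lia, fun hmem ↦ hf ?_⟩
  obtain ⟨z, hz⟩ := mem_multiples.1 hmem
  refine Int.eq_zero_of_abs_lt_dvd (m := (f v).natAbs + 1) ⟨f z, ?_⟩ (by simp)
  conv_lhs => rw [← hz]
  simp

variable (R) in
theorem exists_forall_notMem_multiples [Module.Free ℤ V] {F : Set V} (hF : F.Finite)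
    (h0 : 0 ∉ F) : ∃ k ≠ 0, ∀ v ∈ F, v ∉ multiples R V k := by
  have (v : F) : ∃ k ≠ 0, (v : V) ∉ multiples R V k :=
    exists_notMem_multiples R fun h ↦ h0 (h ▸ v.2)
  choose k hk hmem using this
  have := hF.fintype
  exact ⟨∏ v, k v, Finset.prod_ne_zero_iff.2 fun v _ ↦ hk v, fun v hv h ↦
    hmem ⟨v, hv⟩ (multiples_le_of_dvd (Finset.dvd_prod_of_mem k (Finset.mem_univ _)) h)⟩

variable (R V) in
/-- The action of linear automorphisms of `V` on `V / k V`. -/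
def congruenceRep (k : ℕ) : (V ≃ₗ[R] V) →* Module.End R (V ⧸ multiples R V k) where
  toFun T := (multiples R V k).mapQ (multiples R V k) T fun _ ↦ map_mem_multiples T.toLinearMap
  map_one' := by ext; rfl
  map_mul' _ _ := by ext; rfl

variable (R V) in
/-- The principal congruence subgroup of level `k`. -/
def congruenceSubgroup (k : ℕ) : Subgroup (V ≃ₗ[R] V) := (congruenceRep R V k).toHomUnits.ker

theorem mem_congruenceSubgroup {k : ℕ} {T : V ≃ₗ[R] V} :
    T ∈ congruenceSubgroup R V k ↔ ∀ x, T x - x ∈ multiples R V k := by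
  rw [congruenceSubgroup, MonoidHom.mem_ker, Units.ext_iff, LinearMap.ext_iff,
    (Submodule.mkQ_surjective _).forall]
  exact forall_congr' fun x ↦ Submodule.Quotient.eq _

theorem finiteIndex_comap_congruenceSubgroup [Module.Finite ℤ V] {G : Type*} [Group G]
    (ρ : G →* (V ≃ₗ[R] V)) {k : ℕ} (hk : k ≠ 0) :
    ((congruenceSubgroup R V k).comap ρ).FiniteIndex := by
  have := finite_quotient_multiples (R := R) (V := V) hk
  have : Finite (Module.End R (V ⧸ multiples R V k)) := DFunLike.finite _
  rw [congruenceSubgroup, MonoidHom.comap_ker]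
  exact Subgroup.finiteIndex_ker _

/-- Congruence up to sign modulo `k`. -/
def SignCongr (R : Type*) {V : Type*} [CommRing R] [AddCommGroup V] [Module R V] (k : ℕ)
    (x y : V) : Prop := x - y ∈ multiples R V k ∨ x + y ∈ multiples R V k

namespace SignCongr

variable {k : ℕ} {x y z : V}

theorem of_sub_mem (h : x - y ∈ multiples R V k) : SignCongr R k x y := Or.inl h

protected theorem refl (x : V) : SignCongr R k x x := of_sub_mem (by simp)

theorem neg_left (h : SignCongr R k x y) : SignCongr R k (-x) y := by
  rcases h with h | h
  · exact Or.inr (by simpa [neg_add_eq_sub] using neg_mem h)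
  · exact Or.inl (neg_add' x y ▸ neg_mem h)

protected theorem symm (h : SignCongr R k x y) : SignCongr R k y x := by
  rcases h with h | h
  · exact Or.inl (by simpa using neg_mem h)
  · exact Or.inr (by rwa [add_comm])

theorem trans_sub_mem (h : SignCongr R k x y) (h' : y - z ∈ multiples R V k) :
    SignCongr R k x z := by
  rcases h with h | h
  · exact Or.inl (by simpa using add_mem h h')
  · exact Or.inr (by simpa [add_sub_assoc] using sub_mem h h')

protected theorem trans (h : SignCongr R k x y) (h' : SignCongr R k y z) : SignCongr R k x z := by
  rcases h' with h' | h'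
  · exact h.trans_sub_mem h'
  · simpa using (h.trans_sub_mem (z := -z) (by simpa using h')).symm.neg_left.symm

theorem map (T : V →ₗ[R] V) (h : SignCongr R k x y) : SignCongr R k (T x) (T y) := by
  rcases h with h | h
  · exact Or.inl (map_sub T x y ▸ map_mem_multiples T h)
  · exact Or.inr (map_add T x y ▸ map_mem_multiples T h)

theorem of_dvd {l : ℕ} (hkl : k ∣ l) (h : SignCongr R l x y) : SignCongr R k x y :=
  h.imp (multiples_le_of_dvd hkl ·) (multiples_le_of_dvd hkl ·)

end SignCongr

theorem signCongr_map_iff {k : ℕ} (T : V ≃ₗ[R] V) {x y : V} :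
    SignCongr R k (T x) (T y) ↔ SignCongr R k x y :=
  ⟨fun h ↦ by simpa using h.map T.symm.toLinearMap, fun h ↦ h.map T.toLinearMap⟩

theorem signCongr_zero {x y : V} : SignCongr R 0 x y ↔ x = y ∨ x = -y := by
  simp [SignCongr, mem_multiples_zero, sub_eq_zero, add_eq_zero_iff_eq_neg]

variable (R) in
/-- The automorphisms fixing `v` up to sign modulo `k`. -/
def signStabilizer (k : ℕ) (v : V) : Subgroup (V ≃ₗ[R] V) where
  carrier := {T | SignCongr R k (T v) v}
  one_mem' := SignCongr.refl v
  mul_mem' {T _} hT hT' := (hT'.map T.toLinearMap).trans hT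
  inv_mem' {T} hT := by
    simpa using (hT.map T.symm.toLinearMap).symm

theorem signCongr_map_iff_of_mem {k : ℕ} {v x : V} {T : V ≃ₗ[R] V}
    (hT : T ∈ signStabilizer R k v) : SignCongr R k (T x) v ↔ SignCongr R k x v :=
  ⟨fun h ↦ (signCongr_map_iff T).1 (h.trans hT.symm), fun h ↦ ((signCongr_map_iff T).2 h).trans hT⟩

theorem mem_signStabilizer_of_map_eq_neg {k : ℕ} {v x : V} {T : V ≃ₗ[R] V}
    (hx : SignCongr R k x v) (hT : T x = -x) : T ∈ signStabilizer R k v :=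
  (hx.symm.map T.toLinearMap).trans (hT ▸ hx.neg_left)

end Congruences

section ColourLabel

variable {R V : Type*} [CommRing R] [AddCommGroup V] [Module R V] {k k' : ℕ} {v x y : V}

open Classical in
variable (R) in
/-- The labelling of vectors by generators of a free group which records the class modulo `k'` of
the vectors congruent to `± v` modulo `k` and ignores all other vectors. -/
noncomputable def colourLabel (k k' : ℕ) (v x : V) : FreeGroup (V ⧸ multiples R V k') :=
  if SignCongr R k x v then FreeGroup.of ((multiples R V k').mkQ x) else 1

theorem colourLabel_of_signCongr (h : SignCongr R k x v) :
    colourLabel R k k' v x = FreeGroup.of ((multiples R V k').mkQ x) :=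
  if_pos h

theorem colourLabel_of_not_signCongr (h : ¬SignCongr R k x v) : colourLabel R k k' v x = 1 :=
  if_neg h

theorem colourLabel_congr (hk : k ∣ k') (h : x - y ∈ multiples R V k') :
    colourLabel R k k' v x = colourLabel R k k' v y := by
  have hxy : SignCongr R k x y := .of_sub_mem (multiples_le_of_dvd hk h)
  have hiff : SignCongr R k x v ↔ SignCongr R k y v := ⟨hxy.symm.trans, hxy.trans⟩
  have hmk : (multiples R V k').mkQ x = (multiples R V k').mkQ y := (Submodule.Quotient.eq _).2 h
  rw [colourLabel, colourLabel, hmk, propext hiff]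

end ColourLabel

section ReflectionProducts

theorem exists_mul_pow_apply_eq {R V : Type*} [CommRing R] [LinearOrder R] [IsStrictOrderedRing R]
    [AddCommGroup V] [Module R V] {A B : V ≃ₗ[R] V} {α β : V} {b : R} (hb : 2 ≤ b)
    (hAα : A α = -α) (hAβ : A β = β + b • α) (hBα : B α = α + b • β) (hBβ : B β = -β) {n : ℕ}
    (hn : n ≠ 0) : ∃ x y : R, 0 < y ∧ ((A * B) ^ n) α = x • α + y • β := by
  suffices ∃ x y : R, 0 < y ∧ y < x ∧ ((A * B) ^ n) α = x • α + y • β from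
    let ⟨x, y, hy, _, h⟩ := this; ⟨x, y, hy, h⟩
  have step (x y : R) : (A * B) (x • α + y • β) = (b * (b * x - y) - x) • α + (b * x - y) • β := by
    simp only [LinearEquiv.mul_apply, map_add, map_smul, map_neg, hAα, hAβ, hBα, hBβ]
    module
  induction n with
  | zero => exact absurd rfl hn
  | succ n ih =>
    rcases eq_or_ne n 0 with rfl | hn
    · exact ⟨b * b - 1, b, by linarith, by nlinarith, by simpa using step 1 0⟩
    · obtain ⟨x, y, hy, hyx, h⟩ := ih hn
      have hx : x < b * x - y := by nlinarith
      refine ⟨b * (b * x - y) - x, b * x - y, by linarith, by nlinarith, ?_⟩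
      rw [pow_succ', LinearEquiv.mul_apply, h, step]

end ReflectionProducts

section ArtinGroups

theorem fg_artinGroup {S : Type*} [Finite S] (M : S → S → ℕ) : Group.FG (ArtinGroup M) :=
  Group.fg_iff.2 ⟨Set.range (artinGen M), PresentedGroup.closure_range_of _, Set.finite_range _⟩

theorem artinGroup_induction {S : Type*} {M : S → S → ℕ} {p : ArtinGroup M → Prop} (one : p 1)
    (mul : ∀ g s, p g → p (g * artinGen M s)) (mul_inv : ∀ g s, p g → p (g * (artinGen M s)⁻¹))
    (g : ArtinGroup M) : p g := by
  have hg : g ∈ Subgroup.closure (Set.range (artinGen M)) := by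
    simp [PresentedGroup.closure_range_of]
  induction hg using Subgroup.closure_induction_right with
  | one => exact one
  | mul_right g _ _ hs ih => obtain ⟨s, rfl⟩ := hs; exact mul g s ih
  | mul_inv_cancel g _ _ hs ih => obtain ⟨s, rfl⟩ := hs; exact mul_inv g s ih

end ArtinGroups

section AlternatingWords

open Polynomial

variable {S : Type*}

/-- The letter at position `k` of the alternating words `altWord s t m`. -/
def altLetter (s t : S) (k : ℕ) : S := if k % 2 = 0 then s else t

theorem altLetter_succ (s t : S) (k : ℕ) : altLetter s t (k + 1) = altLetter t s k := by
  rcases Nat.mod_two_eq_zero_or_one k with h | h <;> simp [altLetter, Nat.add_mod, h]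

theorem altWord_succ (s t : S) (m : ℕ) :
    altWord s t (m + 1) = FreeGroup.of s * altWord t s m := by
  have letter (s t : S) (k : ℕ) : (if k % 2 = 0 then FreeGroup.of s else FreeGroup.of t) =
      FreeGroup.of (altLetter s t k) := (apply_ite FreeGroup.of _ _ _).symm
  simp only [altWord, letter, List.range_succ_eq_map, List.map_cons, List.map_map, List.prod_cons,
    comp_def, altLetter_succ]
  rfl

theorem sum_altLetter_eval {R : Type*} [CommRing R] (s t : S) (n : ℕ) {c : R}
    (hc : (Chebyshev.S R n).eval c = 0) (a : S → R) :
    ∑ j ∈ Finset.range (n + 1), a (altLetter s t j) * (Chebyshev.S R j).eval c =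
      ∑ j ∈ Finset.range (n + 1), a (altLetter t s j) * (Chebyshev.S R (j - 1)).eval c := by
  rw [Finset.sum_range_succ, hc, Finset.sum_range_succ']
  simp [altLetter_succ]

end AlternatingWords

namespace CartanWeights

open Polynomial

variable {S R : Type*} [CommRing R] [LinearOrder R] {M : S → S → ℕ} (W : CartanWeights M R)

section GeometricRepresentation

/-- The linear form `2 ⟨e_s, ·⟩` attached to a generator, for the bilinear form with
`2 ⟨e_s, e_t⟩ = - W.weight s t`. -/
noncomputable def form (s : S) : Module.Dual R (S →₀ R) :=
  Finsupp.linearCombination R fun t ↦ -W.weight s t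

@[simp] theorem form_single (s t : S) (a : R) :
    W.form s (Finsupp.single t a) = -(W.weight s t * a) := by
  simp [form, mul_comm]

/-- The reflection of the geometric representation attached to a generator. -/
noncomputable def reflection (s : S) : (S →₀ R) ≃ₗ[R] (S →₀ R) :=
  Module.reflection (x := Finsupp.single s 1) (f := W.form s) (by simp [W.weight_self])

theorem reflection_apply (s : S) (x : S →₀ R) :
    W.reflection s x = x - W.form s x • Finsupp.single s 1 :=
  Module.reflection_apply _ _

@[simp] theorem reflection_single (s t : S) (a : R) :
    W.reflection s (Finsupp.single t a) =
      Finsupp.single t a + Finsupp.single s (W.weight s t * a) := by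
  simp [reflection_apply]

theorem reflection_single_self (s : S) :
    W.reflection s (Finsupp.single s 1) = -Finsupp.single s 1 :=
  Module.reflection_apply_self _

theorem reflection_inv (s : S) : (W.reflection s)⁻¹ = W.reflection s :=
  Module.reflection_inv _

/-- The action of words in the generators on the geometric representation. -/
noncomputable def wordRep : FreeGroup S →* ((S →₀ R) ≃ₗ[R] (S →₀ R)) :=
  FreeGroup.lift W.reflection

/-- The image of the simple root of the letter at position `j` of the word `s t s ⋯` under the
preceding letters. -/
noncomputable def altRoot (s t : S) (j : ℕ) : S →₀ R :=
  Finsupp.single s ((Chebyshev.S R j).eval (W.weight s t)) +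
    Finsupp.single t ((Chebyshev.S R (j - 1)).eval (W.weight s t))

@[simp] theorem altRoot_zero (s t : S) : W.altRoot s t 0 = Finsupp.single s 1 := by
  simp [altRoot]

theorem altRoot_succ (s t : S) (j : ℕ) :
    W.altRoot s t (j + 1) = W.reflection s (W.altRoot t s j) := by
  have := eval_S_add_two (W.weight s t) (j - 1)
  rw [show (j : ℤ) - 1 + 2 = j + 1 by ring, sub_add_cancel] at this
  simp only [altRoot, Nat.cast_add, Nat.cast_one, add_sub_cancel_right, this, W.symm t s, map_add,
    reflection_single, W.weight_self, neg_mul, Finsupp.single_sub, Finsupp.single_neg, two_mul,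
    Finsupp.single_add]
  abel

theorem wordRep_altWord_apply (s t : S) (m : ℕ) (x : S →₀ R) :
    W.wordRep (altWord s t m) x =
      x - ∑ j ∈ Finset.range m, W.form (altLetter s t j) x • W.altRoot s t j := by
  induction m generalizing s t with
  | zero => simp [altWord]
  | succ m ih =>
    rw [altWord_succ, map_mul, LinearEquiv.mul_apply, ih, wordRep, FreeGroup.lift_apply_of,
      map_sub, map_sum, Finset.sum_range_succ']
    simp only [map_smul, ← altRoot_succ, altLetter_succ, altRoot_zero, W.reflection_apply s x]
    simp only [altLetter, Nat.zero_mod, if_true]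
    abel

theorem wordRep_altWord_comm {s t : S} (h : 2 ≤ M s t) :
    W.wordRep (altWord s t (M s t)) = W.wordRep (altWord t s (M s t)) := by
  obtain ⟨n, hn⟩ := Nat.exists_eq_add_of_le' (one_le_two.trans h)
  have hc := W.eval_sub_one h
  rw [hn, Nat.cast_add, Nat.cast_one, add_sub_cancel_right] at hc
  ext x : 1
  have coeff (s t : S) := sum_altLetter_eval s t n hc fun u ↦ W.form u x
  simp only [wordRep_altWord_apply, hn, altRoot, W.symm t s, smul_add, Finset.sum_add_distrib,
    Finsupp.smul_single, smul_eq_mul, ← Finsupp.single_finsetSum]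
  rw [coeff s t, ← coeff t s, add_comm]

/-- The geometric representation of the Artin group, which factors through the Coxeter group. -/
noncomputable def rep : ArtinGroup M →* ((S →₀ R) ≃ₗ[R] (S →₀ R)) :=
  PresentedGroup.toGroup (f := W.reflection) <| by
    rintro _ ⟨s, t, -, h, rfl⟩
    rw [map_mul, map_inv, mul_inv_eq_one]
    exact W.wordRep_altWord_comm h

@[simp] theorem rep_artinGen (s : S) : W.rep (artinGen M s) = W.reflection s :=
  PresentedGroup.toGroup.of _

theorem rep_artinGen_inv (s : S) : W.rep (artinGen M s)⁻¹ = W.reflection s := by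
  rw [map_inv, rep_artinGen, reflection_inv]

theorem altRoot_swap {s t : S} {j : ℕ} (hj : j < M s t) (h : 2 ≤ M s t) :
    W.altRoot t s j = W.altRoot s t (M s t - 1 - j) := by
  have := eval_S_sub_two_sub (W.eval_sub_one h) (W.eval_sub_two h)
  have cast : ((M s t - 1 - j : ℕ) : ℤ) = M s t - 2 - (j - 1) := by lia
  rw [altRoot, altRoot, W.symm t s, cast, this,
    show (M s t : ℤ) - 2 - (j - 1) - 1 = M s t - 2 - j by ring, this, add_comm]

theorem altRoot_apply_left {s t : S} (hst : s ≠ t) (j : ℕ) :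
    W.altRoot s t j s = (Chebyshev.S R j).eval (W.weight s t) := by
  simp [altRoot, hst]

theorem altRoot_apply_right {s t : S} (hst : s ≠ t) (j : ℕ) :
    W.altRoot s t j t = (Chebyshev.S R (j - 1)).eval (W.weight s t) := by
  simp [altRoot, hst]

theorem altRoot_ne {s t : S} (hst : s ≠ t) {i j : ℕ} (hij : i < j) (hj : j < M s t) :
    W.altRoot s t i ≠ W.altRoot s t j := by
  intro h
  have hs := DFunLike.congr_fun h s
  have ht := DFunLike.congr_fun h t
  rw [altRoot_apply_left _ hst, altRoot_apply_left _ hst] at hs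
  rw [altRoot_apply_right _ hst, altRoot_apply_right _ hst] at ht
  have hpos := W.eval_pos (j := j - i - 1) (by lia : j - i - 1 + 1 < M s t)
  rw [show ((j - i - 1 : ℕ) : ℤ) = j - i - 1 by lia, eval_S_sub_sub_one_eq_zero hs ht] at hpos
  exact lt_irrefl _ hpos

theorem altRoot_ne_neg [IsOrderedRing R] {s t : S} (hst : s ≠ t) {i j : ℕ} (hij : i < j)
    (hj : j < M s t) : W.altRoot s t i ≠ -W.altRoot s t j := by
  intro h
  have hs := DFunLike.congr_fun h s
  rw [Finsupp.neg_apply, altRoot_apply_left _ hst, altRoot_apply_left _ hst] at hs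
  have nonneg : 0 ≤ (Chebyshev.S R j).eval (W.weight s t) := by
    rcases Nat.lt_or_ge (j + 1) (M s t) with hlt | hge
    · exact (W.eval_pos hlt).le
    · rw [← W.eval_sub_one (s := s) (t := t) (by lia), show (M s t : ℤ) - 1 = j by lia]
  exact (W.eval_pos (j := i) (by lia)).not_ge (hs ▸ neg_nonpos.2 nonneg)

end GeometricRepresentation

section Cocycle

variable {P : Type*} [Group P] {l : (S →₀ R) → P}

/-- A labelling of the vectors of the geometric representation for which the labels of the roots of
each rank-two subsystem, moved by any automorphism, commute. -/
def CommutingLabels (l : (S →₀ R) → P) : Prop :=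
  ∀ (T : (S →₀ R) ≃ₗ[R] (S →₀ R)) ⦃s t : S⦄, s ≠ t → ∀ ⦃i j : ℕ⦄, i < j → j < M s t →
    Commute (l (T (W.altRoot s t i))) (l (T (W.altRoot s t j)))

/-- The action of words on the geometric representation, with a record of the labels of the roots
whose walls are crossed. -/
noncomputable def wordWreath (l : (S →₀ R) → P) :
    FreeGroup S →* P ≀ᵣ ((S →₀ R) ≃ₗ[R] (S →₀ R)) :=
  FreeGroup.lift fun s ↦ ⟨fun T ↦ l (T⁻¹ (Finsupp.single s 1)), W.reflection s⟩

theorem wordWreath_right (w : FreeGroup S) : (W.wordWreath l w).right = W.wordRep w :=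
  DFunLike.congr_fun (FreeGroup.ext_hom (f := RegularWreathProduct.rightHom.comp (W.wordWreath l))
    (g := W.wordRep) fun s ↦ by simp [wordWreath, wordRep]) w

theorem wordWreath_altWord_left (s t : S) (m : ℕ) (T : (S →₀ R) ≃ₗ[R] (S →₀ R)) :
    (W.wordWreath l (altWord s t m)).left T =
      ((List.range m).map fun j ↦ l (T⁻¹ (W.altRoot s t j))).prod := by
  induction m generalizing s t T with
  | zero => simp [altWord]
  | succ m ih =>
    rw [altWord_succ, map_mul, RegularWreathProduct.mul_left, Pi.mul_apply, ih, wordWreath,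
      FreeGroup.lift_apply_of, List.range_succ_eq_map, List.map_cons, List.map_map, List.prod_cons]
    simp [comp_def, altRoot_succ]

theorem wordWreath_altWord_comm (hl : W.CommutingLabels l) {s t : S} (hst : s ≠ t)
    (h : 2 ≤ M s t) :
    W.wordWreath l (altWord s t (M s t)) = W.wordWreath l (altWord t s (M s t)) := by
  refine RegularWreathProduct.ext (funext fun T ↦ ?_) ?_
  · have reverse : (List.range (M s t)).map (fun j ↦ l (T⁻¹ (W.altRoot t s j))) =
        ((List.range (M s t)).map fun j ↦ l (T⁻¹ (W.altRoot s t j))).reverse := by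
      rw [← List.map_reverse, List.range_eq_range', List.reverse_range', ← List.range_eq_range',
        List.map_map]
      refine List.map_congr_left fun j hj ↦ ?_
      rw [W.altRoot_swap (List.mem_range.1 hj) h, comp_apply, zero_add]
    rw [wordWreath_altWord_left, wordWreath_altWord_left, reverse]
    exact (List.reverse_perm _).symm.prod_eq' (List.pairwise_map.2
      (List.pairwise_lt_range.imp_of_mem fun _ hj hij ↦ hl _ hst hij (List.mem_range.1 hj)))
  · rw [wordWreath_right, wordWreath_right, W.wordRep_altWord_comm h]

/-- The geometric representation of the Artin group, with a record of the labels of the roots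
whose walls are crossed. -/
noncomputable def wreathHom (hl : W.CommutingLabels l) :
    ArtinGroup M →* P ≀ᵣ ((S →₀ R) ≃ₗ[R] (S →₀ R)) :=
  PresentedGroup.toGroup (f := fun s ↦ ⟨fun T ↦ l (T⁻¹ (Finsupp.single s 1)), W.reflection s⟩) <| by
    rintro _ ⟨s, t, hst, h, rfl⟩
    rw [map_mul, map_inv, mul_inv_eq_one]
    exact W.wordWreath_altWord_comm hl hst h

theorem wreathHom_artinGen (hl : W.CommutingLabels l) (s : S) :
    W.wreathHom hl (artinGen M s) =
      ⟨fun T ↦ l (T⁻¹ (Finsupp.single s 1)), W.reflection s⟩ :=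
  PresentedGroup.toGroup.of _

theorem wreathHom_right (hl : W.CommutingLabels l) (g : ArtinGroup M) :
    (W.wreathHom hl g).right = W.rep g :=
  DFunLike.congr_fun (PresentedGroup.ext
    (φ := RegularWreathProduct.rightHom.comp (W.wreathHom hl)) (ψ := W.rep)
    fun s ↦ by simp [wreathHom_artinGen]) g

/-- The product of the labels of the walls crossed by an element of the Artin group, when starting
from the chamber `T`. -/
noncomputable def crossing (hl : W.CommutingLabels l) (T : (S →₀ R) ≃ₗ[R] (S →₀ R))
    (g : ArtinGroup M) : P :=
  (W.wreathHom hl g).left T⁻¹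

variable (hl : W.CommutingLabels l) (T : (S →₀ R) ≃ₗ[R] (S →₀ R))

@[simp] theorem crossing_one : W.crossing hl T 1 = 1 := by
  simp [crossing]

theorem crossing_mul (g h : ArtinGroup M) :
    W.crossing hl T (g * h) = W.crossing hl T g * W.crossing hl (T * W.rep g) h := by
  simp [crossing, wreathHom_right]

theorem crossing_inv (g : ArtinGroup M) :
    W.crossing hl T g⁻¹ = (W.crossing hl (T * W.rep g⁻¹) g)⁻¹ := by
  simp [crossing, wreathHom_right]

theorem crossing_artinGen (s : S) :
    W.crossing hl T (artinGen M s) = l (T (Finsupp.single s 1)) := by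
  simp only [crossing, wreathHom_artinGen, inv_inv]

end Cocycle

section CongruenceLabels

/-- The modulus `k` separates, up to sign, the roots of each rank-two subsystem. -/
def SeparatesRoots (k : ℕ) : Prop :=
  ∀ ⦃s t : S⦄, s ≠ t → ∀ ⦃i j : ℕ⦄, i < j → j < M s t →
    ¬SignCongr R k (W.altRoot s t i) (W.altRoot s t j)

theorem exists_separatesRoots [IsStrictOrderedRing R] [Module.Finite ℤ R] [Finite S] :
    ∃ k ≠ 0, W.SeparatesRoots k := by
  let A : Set (S →₀ R) := ⋃ s, ⋃ t, W.altRoot s t '' Set.Iio (M s t)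
  have hA : A.Finite := Set.finite_iUnion fun s ↦ Set.finite_iUnion fun t ↦
    (Set.finite_Iio _).image _
  have mem (s t : S) {j : ℕ} (hj : j < M s t) : W.altRoot s t j ∈ A :=
    Set.mem_iUnion₂.2 ⟨s, t, j, hj, rfl⟩
  obtain ⟨k, hk, h⟩ := exists_forall_notMem_multiples R
    (F := (Set.image2 (· - ·) A A ∪ Set.image2 (· + ·) A A) \ {0})
    (((hA.image2 _ hA).union (hA.image2 _ hA)).sdiff) (by simp)
  refine ⟨k, hk, fun s t hst i j hij hj hc ↦ ?_⟩
  have hi := mem s t (hij.trans hj)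
  rcases hc with hc | hc
  · exact h _ ⟨.inl (Set.mem_image2_of_mem hi (mem s t hj)),
      sub_ne_zero.2 (W.altRoot_ne hst hij hj)⟩ hc
  · exact h _ ⟨.inr (Set.mem_image2_of_mem hi (mem s t hj)),
      fun h0 ↦ W.altRoot_ne_neg hst hij hj (eq_neg_of_add_eq_zero_left h0)⟩ hc

theorem commutingLabels_colourLabel {k : ℕ} (hk : W.SeparatesRoots k) (k' : ℕ) (v : S →₀ R) :
    W.CommutingLabels (colourLabel R k k' v) := by
  intro T s t hst i j hij hj
  by_cases hi : SignCongr R k (T (W.altRoot s t i)) v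
  · have : ¬SignCongr R k (T (W.altRoot s t j)) v := fun h ↦
      hk hst hij hj ((signCongr_map_iff T).1 (hi.trans h.symm))
    simp [colourLabel_of_not_signCongr this]
  · simp [colourLabel_of_not_signCongr hi]

section Crossing

variable {P : Type*} [Group P] {l : (S →₀ R) → P} (hl : W.CommutingLabels l) {k : ℕ}

theorem crossing_congr (hcongr : ∀ ⦃x y⦄, x - y ∈ multiples R (S →₀ R) k → l x = l y)
    {T T' : (S →₀ R) ≃ₗ[R] (S →₀ R)} (h : ∀ x, T x - T' x ∈ multiples R (S →₀ R) k)
    (g : ArtinGroup M) : W.crossing hl T g = W.crossing hl T' g := by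
  induction g using artinGroup_induction generalizing T T' with
  | one => simp
  | mul g s ih =>
    rw [crossing_mul, crossing_mul, ih h, crossing_artinGen, crossing_artinGen]
    exact congrArg _ (hcongr (h _))
  | mul_inv g s ih =>
    rw [crossing_mul, crossing_mul, ih h, crossing_inv, crossing_inv, crossing_artinGen,
      crossing_artinGen]
    exact congrArg _ (congrArg _ (hcongr (h _)))

/-- The crossing cocycle, restricted to a congruence subgroup on which it is a homomorphism. -/
noncomputable def crossingHom (hcongr : ∀ ⦃x y⦄, x - y ∈ multiples R (S →₀ R) k → l x = l y) :
    (congruenceSubgroup R (S →₀ R) k).comap W.rep →* P where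
  toFun g := W.crossing hl 1 g
  map_one' := W.crossing_one hl 1
  map_mul' g h := by
    rw [Subgroup.coe_mul, crossing_mul, one_mul]
    exact congrArg _ (W.crossing_congr hl hcongr (mem_congruenceSubgroup.1 g.2) h)

theorem crossingHom_apply (hcongr : ∀ ⦃x y⦄, x - y ∈ multiples R (S →₀ R) k → l x = l y)
    (g : (congruenceSubgroup R (S →₀ R) k).comap W.rep) :
    W.crossingHom hl hcongr g = W.crossing hl 1 g := rfl

end Crossing

end CongruenceLabels

section Regions

/-- The root of the wall between the chambers of `g` and `g s`. -/
noncomputable def wallRoot (g : ArtinGroup M) (s : S) : S →₀ R := W.rep g (Finsupp.single s 1)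

/-- The conjugate of a generator which acts as the reflection in the wall between the chambers of
`g` and `g s`. -/
def wallElement (g : ArtinGroup M) (s : S) : ArtinGroup M := g * artinGen M s * g⁻¹

theorem rep_wallElement_apply (g : ArtinGroup M) (s : S) (x : S →₀ R) :
    W.rep (wallElement g s) x = x - W.form s (W.rep g⁻¹ x) • W.wallRoot g s := by
  rw [wallElement, map_mul, map_mul, LinearEquiv.mul_apply, LinearEquiv.mul_apply, rep_artinGen,
    reflection_apply, map_sub, map_smul, ← LinearEquiv.mul_apply, ← map_mul, mul_inv_cancel,
    map_one]
  rfl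

theorem rep_wallElement_wallRoot (g : ArtinGroup M) (s : S) :
    W.rep (wallElement g s) (W.wallRoot g s) = -W.wallRoot g s := by
  rw [wallElement, wallRoot, ← LinearEquiv.mul_apply, ← map_mul, inv_mul_cancel_right, map_mul,
    LinearEquiv.mul_apply, rep_artinGen, reflection_single_self, map_neg]

theorem rep_wallElement_sq (g : ArtinGroup M) (s : S) : W.rep (wallElement g s ^ 2) = 1 := by
  have : W.rep (artinGen M s) ^ 2 = 1 := by
    rw [sq, mul_eq_one_iff_eq_inv, rep_artinGen, reflection_inv]
  rw [wallElement, conj_pow, map_mul, map_mul, map_pow, this, map_inv, mul_one, mul_inv_cancel]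

/-- The elements of the Artin group reached from `1` by right multiplication by generators without
crossing a wall whose root is congruent to `± v` modulo `k`. -/
inductive Region (k : ℕ) (v : S →₀ R) : ArtinGroup M → Prop where
  | one : Region k v 1
  | mul_artinGen {g : ArtinGroup M} {s : S} (hg : Region k v g)
      (h : ¬SignCongr R k (W.wallRoot g s) v) : Region k v (g * artinGen M s)

/-- The wall between the chambers of `g` and `g s` has a root congruent to `± v` modulo `k` and
bounds the region of the identity. -/
def IsBoundaryWall (k : ℕ) (v : S →₀ R) (g : ArtinGroup M) (s : S) : Prop :=
  W.Region k v g ∧ SignCongr R k (W.wallRoot g s) v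

variable {W} {k : ℕ} {v : S →₀ R} {g : ArtinGroup M} {s : S}

theorem IsBoundaryWall.rep_wallElement_mem (h : W.IsBoundaryWall k v g s) :
    W.rep (wallElement g s) ∈ signStabilizer R k v :=
  mem_signStabilizer_of_map_eq_neg h.2 (W.rep_wallElement_wallRoot g s)

section Boundary

variable {P : Type*} [Group P] {l : (S →₀ R) → P} (hl : W.CommutingLabels l)
  (hsupp : ∀ x, ¬SignCongr R k x v → l x = 1) {T : (S →₀ R) ≃ₗ[R] (S →₀ R)}
include hsupp

theorem Region.crossing_eq_one (hT : T ∈ signStabilizer R k v) (hg : W.Region k v g) :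
    W.crossing hl T g = 1 := by
  induction hg with
  | one => exact W.crossing_one hl T
  | mul_artinGen hg h ih =>
    rw [crossing_mul, ih, crossing_artinGen, one_mul]
    exact hsupp _ (mt (signCongr_map_iff_of_mem hT).1 h)

theorem IsBoundaryWall.crossing_wallElement (hT : T ∈ signStabilizer R k v)
    (h : W.IsBoundaryWall k v g s) :
    W.crossing hl T (wallElement g s) = l (T (W.wallRoot g s)) := by
  have hback : T * W.rep (g * artinGen M s) * W.rep g⁻¹ = T * W.rep (wallElement g s) := by
    rw [wallElement, map_mul W.rep _ g⁻¹, mul_assoc]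
  rw [wallElement, crossing_mul, crossing_inv, hback,
    h.1.crossing_eq_one hl hsupp (mul_mem hT h.rep_wallElement_mem), crossing_mul,
    h.1.crossing_eq_one hl hsupp hT, crossing_artinGen, inv_one, mul_one, one_mul]
  rfl

theorem IsBoundaryWall.crossing_wallElement_sq (h : W.IsBoundaryWall k v g s) :
    W.crossing hl 1 (wallElement g s ^ 2) = l (W.wallRoot g s) * l (-W.wallRoot g s) := by
  rw [sq, crossing_mul, h.crossing_wallElement hl hsupp (one_mem _),
    h.crossing_wallElement hl hsupp (mul_mem (one_mem _) h.rep_wallElement_mem), one_mul,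
    rep_wallElement_wallRoot, LinearEquiv.coe_one, id]

end Boundary

theorem IsBoundaryWall.isLargeGroup [Module.Finite ℤ (S →₀ R)] (hk : W.SeparatesRoots k) {k' : ℕ}
    (hkk' : k ∣ k') (hk' : k' ≠ 0) {g' : ArtinGroup M} {s' : S} (h : W.IsBoundaryWall k v g s)
    (h' : W.IsBoundaryWall k v g' s')
    (hne : W.wallRoot g s - W.wallRoot g' s' ∉ multiples R (S →₀ R) k') :
    IsLargeGroup (ArtinGroup M) := by
  let hl := W.commutingLabels_colourLabel hk k' v
  let a (g : ArtinGroup M) (s : S) : (congruenceSubgroup R (S →₀ R) k').comap W.rep :=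
    ⟨wallElement g s ^ 2, by
      rw [Subgroup.mem_comap, rep_wallElement_sq]
      exact one_mem _⟩
  let f := W.crossingHom hl fun _ _ ↦ colourLabel_congr hkk'
  have hf {g s} (h : W.IsBoundaryWall k v g s) : f (a g s) =
      FreeGroup.of ((multiples R (S →₀ R) k').mkQ (W.wallRoot g s)) *
        FreeGroup.of ((multiples R (S →₀ R) k').mkQ (-W.wallRoot g s)) := by
    rw [crossingHom_apply, h.crossing_wallElement_sq hl fun _ ↦ colourLabel_of_not_signCongr,
      colourLabel_of_signCongr h.2, colourLabel_of_signCongr h.2.neg_left]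
  refine ⟨_, finiteIndex_comap_congruenceSubgroup W.rep hk',
    exists_surjective_of_not_commute f (a := a g s) (b := a g' s') ?_⟩
  rw [hf h, hf h']
  exact not_commute_of_mul_of fun heq ↦ hne ((Submodule.Quotient.eq _).1 heq)

end Regions

section SecondWall

/-- The group generated by the reflections in the coloured walls which bound the region of the
identity. -/
noncomputable def boundaryGroup (k : ℕ) (v : S →₀ R) : Subgroup ((S →₀ R) ≃ₗ[R] (S →₀ R)) :=
  Subgroup.closure {T | ∃ g s, W.IsBoundaryWall k v g s ∧ W.rep (wallElement g s) = T}

theorem exists_rep_eq_mul (k : ℕ) (v : S →₀ R) (h : ArtinGroup M) :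
    ∃ T ∈ W.boundaryGroup k v, ∃ g, W.Region k v g ∧ W.rep h = T * W.rep g := by
  have step (h : ArtinGroup M) (s : S)
      (ih : ∃ T ∈ W.boundaryGroup k v, ∃ g, W.Region k v g ∧ W.rep h = T * W.rep g) :
      ∃ T ∈ W.boundaryGroup k v, ∃ g, W.Region k v g ∧
        W.rep h * W.reflection s = T * W.rep g := by
    obtain ⟨T, hT, g, hg, e⟩ := ih
    rw [e, ← rep_artinGen]
    by_cases hs : SignCongr R k (W.wallRoot g s) v
    · refine ⟨T * W.rep (wallElement g s),
        mul_mem hT (Subgroup.subset_closure ⟨g, s, ⟨hg, hs⟩, rfl⟩), g, hg, ?_⟩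
      rw [mul_assoc, mul_assoc, ← map_mul, ← map_mul, wallElement, inv_mul_cancel_right]
    · exact ⟨T, hT, g * artinGen M s, .mul_artinGen hg hs, by rw [map_mul, mul_assoc]⟩
  induction h using artinGroup_induction with
  | one => exact ⟨1, one_mem _, 1, .one, by simp⟩
  | mul h s ih => rw [map_mul, rep_artinGen]; exact step h s ih
  | mul_inv h s ih => rw [map_mul, rep_artinGen_inv]; exact step h s ih

theorem signCongr_zero_wallRoot {k : ℕ} {v : S →₀ R}
    (hv : ∀ g s, W.IsBoundaryWall k v g s → W.wallRoot g s = v) {h : ArtinGroup M} {s : S}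
    (hs : SignCongr R k (W.wallRoot h s) v) : SignCongr R 0 (W.wallRoot h s) v := by
  have hle : W.boundaryGroup k v ≤ signStabilizer R 0 v := by
    rw [boundaryGroup, Subgroup.closure_le]
    rintro _ ⟨g, s, hgs, rfl⟩
    refine mem_signStabilizer_of_map_eq_neg (.refl v) ?_
    simpa only [hv g s hgs] using W.rep_wallElement_wallRoot g s
  obtain ⟨T, hT, g, hg, e⟩ := W.exists_rep_eq_mul k v h
  have hroot : W.wallRoot h s = T (W.wallRoot g s) := by rw [wallRoot, e]; rfl
  have hgs : SignCongr R k (W.wallRoot g s) v :=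
    (signCongr_map_iff_of_mem ((hle hT).of_dvd (dvd_zero k))).1 (hroot ▸ hs)
  rw [hroot, hv g s ⟨hg, hgs⟩]
  exact hle hT

variable [IsStrictOrderedRing R]

theorem exists_wallRoot_pow_eq {s t u : S} (hst : 1 ≤ W.weight s t) (hsu : 1 ≤ W.weight s u)
    (htu : 1 ≤ W.weight t u) {n : ℕ} (hn : n ≠ 0) :
    ∃ x y : R, 0 < y ∧ W.wallRoot ((artinGen M s * wallElement (artinGen M t) u) ^ n) s =
      Finsupp.single s x + Finsupp.single u y + Finsupp.single t (y * W.weight t u) := by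
  let b := W.weight s u + W.weight t u * W.weight s t
  let β := W.wallRoot (artinGen M t) u
  have hβ : β = Finsupp.single u 1 + Finsupp.single t (W.weight t u) := by simp [β, wallRoot]
  have hAβ : W.rep (artinGen M s) β = β + b • Finsupp.single s 1 := by
    simp only [hβ, b, rep_artinGen, map_add, reflection_single, mul_one, Finsupp.smul_single_one,
      Finsupp.single_add, mul_comm (W.weight s t)]
    abel
  have hBα : W.rep (wallElement (artinGen M t) u) (Finsupp.single s 1) =
      Finsupp.single s 1 + b • β := by
    rw [rep_wallElement_apply, rep_artinGen_inv, reflection_single, map_add, form_single,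
      form_single, W.symm u s, W.symm u t, W.symm t s]
    simp only [b, β, mul_one]
    module
  obtain ⟨x, y, hy, h⟩ := exists_mul_pow_apply_eq (b := b) (by nlinarith)
    (by rw [rep_artinGen, reflection_single_self]) hAβ hBα (W.rep_wallElement_wallRoot _ u) hn
  refine ⟨x, y, hy, ?_⟩
  rw [wallRoot, map_pow, map_mul, h]
  simp [hβ, add_assoc]

theorem exists_isBoundaryWall_ne [Module.Finite ℤ (S →₀ R)] {s t u : S} (hsu : s ≠ u) (htu : t ≠ u)
    (hst' : 1 ≤ W.weight s t) (hsu' : 1 ≤ W.weight s u) (htu' : 1 ≤ W.weight t u) {k : ℕ}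
    (hk : k ≠ 0) : ∃ g s', W.IsBoundaryWall k (Finsupp.single s 1) g s' ∧
      W.wallRoot g s' ≠ Finsupp.single s 1 := by
  by_contra! hv
  obtain ⟨n, hn, -, hmem⟩ := Subgroup.exists_pow_mem_of_index_ne_zero
    (finiteIndex_comap_congruenceSubgroup W.rep hk).index_ne_zero
    (artinGen M s * wallElement (artinGen M t) u)
  obtain ⟨x, y, hy, h⟩ := W.exists_wallRoot_pow_eq hst' hsu' htu' hn.ne'
  have := signCongr_zero.1 (W.signCongr_zero_wallRoot hv
    (.of_sub_mem (mem_congruenceSubgroup.1 hmem (Finsupp.single s 1))))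
  rw [h] at this
  have hy0 : y = 0 := by
    rcases this with h | h <;> simpa [hsu, htu] using DFunLike.congr_fun h u
  exact hy.ne' hy0

theorem isLargeGroup [Module.Finite ℤ R] [Finite S] {s t u : S} (hsu : s ≠ u) (htu : t ≠ u)
    (hst' : 1 ≤ W.weight s t) (hsu' : 1 ≤ W.weight s u) (htu' : 1 ≤ W.weight t u) :
    IsLargeGroup (ArtinGroup M) := by
  obtain ⟨k, hk, hsep⟩ := W.exists_separatesRoots
  obtain ⟨g, s', hgs, hne⟩ := W.exists_isBoundaryWall_ne hsu htu hst' hsu' htu' hk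
  obtain ⟨m, hm, hmem⟩ := exists_notMem_multiples R (sub_ne_zero.2 hne)
  have hbase : W.wallRoot (1 : ArtinGroup M) s = Finsupp.single s 1 := by simp [wallRoot]
  refine hgs.isLargeGroup hsep (k' := k * m) (g' := 1) (s' := s) (dvd_mul_right k m)
    (mul_ne_zero hk hm) ⟨.one, hbase ▸ .refl _⟩ fun h ↦ hmem ?_
  exact multiples_le_of_dvd (dvd_mul_left m k) (hbase ▸ h)

end SecondWall

end CartanWeights

theorem largeType_hyperbolicType_twistlessHierarchy_propertyRInfinity_general {S : Type*}
    [Finite S] (M : S → S → ℕ) (hM : IsCoxeterMatrix M) {s t u : S} (hst : s ≠ t) (hsu : s ≠ u)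
    (htu : t ≠ u) (hst' : M s t ≠ 2) (hsu' : M s u ≠ 2) (htu' : M t u ≠ 2) :
    PropertyRInfinity (ArtinGroup M) := by
  have := fg_artinGroup M
  exact ((CartanWeights.cos hM).isLargeGroup hsu htu (CartanWeights.one_le_cos hM hst hst')
    (CartanWeights.one_le_cos hM hsu hsu') (CartanWeights.one_le_cos hM htu htu')).propertyRInfinity

/-- A large-type, hyperbolic-type Artin group (on at least 3 generators) whose presentation
graph admits a twistless hierarchy terminating in twistless stars has property `R_∞`. -/
theorem largeType_hyperbolicType_twistlessHierarchy_propertyRInfinity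
    {S : Type*} [Fintype S] (hcard : 3 ≤ Fintype.card S)
    (M : S → S → ℕ) (hM : IsCoxeterMatrix M)
    (hlarge : ∀ s t : S, s ≠ t → M s t = 0 ∨ 3 ≤ M s t)
    (hhyp : ¬ ∃ s t u : S, s ≠ t ∧ t ≠ u ∧ s ≠ u ∧ M s t = 3 ∧ M t u = 3 ∧ M s u = 3)
    (hhier : AdmitsTwistlessHierarchy (presGraph M) Set.univ) :
    PropertyRInfinity (ArtinGroup M) := by
  obtain ⟨s, t, u, hst, hsu, htu⟩ := Fintype.two_lt_card_iff.1 hcard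
  have ne_two {a b : S} (h : a ≠ b) : M a b ≠ 2 := by have := hlarge a b h; lia
  exact largeType_hyperbolicType_twistlessHierarchy_propertyRInfinity_general M hM hst hsu htu
    (ne_two hst) (ne_two hsu) (ne_two htu)
end

section
/- Let M be a Coxeter matrix on a finite set S with at least 3 elements such that for all s ≠ t either M s t = 0 or M s t ≥ 3 (large type), and such that there are no three pairwise distinct s, t, u ∈ S with M s t = M t u = M s u = 3 (hyperbolic type). If every automorphism of the Artin group A[M] lies in the subgroup Aut_Γ(A[M]) of Aut(A[M]) generated by the inner automorphisms, the graph-induced automorphisms, and the global inversion, then A[M] has property R_∞. -/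
/-- The generating set of the subgroup `Aut_Γ(A[M]) ≤ Aut(A[M])`: inner automorphisms,
graph-induced automorphisms (coming from label-preserving permutations of the
generators), and the global inversion. -/
def autGammaGens {S : Type*} (M : S → S → ℕ) : Set (MulAut (ArtinGroup M)) :=
  { ψ | (∃ a : ArtinGroup M, ∀ x : ArtinGroup M, ψ x = a * x * a⁻¹) ∨
        (∃ σ : Equiv.Perm S, (∀ s t : S, M (σ s) (σ t) = M s t) ∧
          ∀ s : S, ψ (artinGen M s) = artinGen M (σ s)) ∨
        (∀ s : S, ψ (artinGen M s) = (artinGen M s)⁻¹) }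

/-!
Let the generators of the Artin group act by reflections in the geometric representation of its
Coxeter group, on the space with basis the simple roots. An automorphism `φ` generated by inner,
graph-induced and inversion automorphisms has the form `t_s ↦ a t_{σ s}^{±1} a⁻¹`; as a reflection
is its own inverse, `φ` becomes conjugation by the linear map `T = ρ(a) P_σ`. Hence `φ`-twisted
conjugate elements `g`, `h` give conjugate maps `ρ(g) T`, `ρ(h) T`, and it suffices to see that the
trace of `ρ(g) P_σ` takes infinitely many values.

Multiplying by a reflection changes such a trace by a value of the coroot `f_s` on the orbit of the
root `α_{σ s}`. If the traces took finitely many values, these coroot values, and then, by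
connectedness of the Coxeter graph, all coroots, would be bounded on the orbit of any given root.
But if `p`, `q`, `r` are pairwise joined, then reflecting in them in turn makes all three
coordinates of `α_p` arbitrarily large. A linear form that is nonpositive on `α_p`, `α_q`, `α_r`
and not zero on all of them is therefore unbounded on the orbit. Such a form is `f_p + f_q + f_r`
if the three labels are not all `3`, and the coroot of a generator outside the triangle that is
joined to it otherwise.
-/

section TwistedConjugacy

variable {G H α : Type*} [Group G] [Group H] {φ : G ≃* G}

theorem TwistedConj.isConj_map_mul {ρ : G →* H} {T : H}
    (hT : ∀ x, SemiconjBy T (ρ x) (ρ (φ x))) {g h : G} (hgh : TwistedConj φ g h) :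
    IsConj (ρ g * T) (ρ h * T) := by
  obtain ⟨x, rfl⟩ := hgh
  refine isConj_iff.2 ⟨ρ x, ?_⟩
  have hx : T * (ρ x)⁻¹ = (ρ (φ x))⁻¹ * T := (hT x).inv_right.eq
  simp only [map_mul, map_inv, mul_assoc, hx]

theorem reidemeisterInfinite_of_infinite_range {f : G → α}
    (hf : ∀ g h, TwistedConj φ g h → f g = f h) (hinf : (Set.range f).Infinite) :
    ReidemeisterInfinite φ := by
  rw [ReidemeisterInfinite, ← not_finite_iff_infinite]
  intro hfin
  rw [← Set.range_quot_lift hf] at hinf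
  exact hinf (Set.finite_range _)

end TwistedConjugacy

section AlternatingWords

variable {S G : Type*} [Group G]

theorem altWord_two_mul (s t : S) (k : ℕ) :
    altWord s t (2 * k) = (FreeGroup.of s * FreeGroup.of t) ^ k := by
  induction k with
  | zero => simp [altWord]
  | succ k ih =>
    rw [pow_succ, ← ih]
    simp [altWord, Nat.mul_succ, List.range_succ, Nat.add_mod]

theorem altWord_two_mul_add_one (s t : S) (k : ℕ) :
    altWord s t (2 * k + 1) = (FreeGroup.of s * FreeGroup.of t) ^ k * FreeGroup.of s := by
  rw [← altWord_two_mul]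
  simp [altWord, List.range_succ]

theorem lift_altWord_mul_inv_eq_one {f : S → G} {s t : S} {m : ℕ} (hs : (f s)⁻¹ = f s)
    (ht : (f t)⁻¹ = f t) (hst : (f s * f t) ^ m = 1) :
    FreeGroup.lift f (altWord s t m * (altWord t s m)⁻¹) = 1 := by
  have hts (k : ℕ) : ((f t * f s) ^ k)⁻¹ = (f s * f t) ^ k := by
    rw [← inv_pow, mul_inv_rev, hs, ht]
  obtain ⟨k, rfl | rfl⟩ := Nat.even_or_odd' m
  · simp only [altWord_two_mul, map_mul, map_inv, map_pow, FreeGroup.lift_apply_of, hts]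
    rw [← pow_add, ← two_mul, hst]
  · simp only [altWord_two_mul_add_one, map_mul, map_inv, map_pow, FreeGroup.lift_apply_of,
      mul_inv_rev, hts, ht]
    rw [mul_assoc, ← mul_assoc (f s), ← pow_succ', ← pow_add, ← hst]
    congr 1
    ring

end AlternatingWords

section Reflections

open Polynomial.Chebyshev in
theorem eval_chebyshevS_two_mul_cos {θ : ℝ} (hθ : Real.sin θ ≠ 0) (n : ℤ) :
    (S ℝ n).eval (2 * Real.cos θ) = Real.sin ((n + 1) * θ) / Real.sin θ := by
  rw [eq_div_iff hθ, S_two_mul_real_cos]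

theorem reflection_mul_reflection_sq_eq_one {R V : Type*} [CommRing R] [AddCommGroup V]
    [Module R V] {x y : V} {f g : Module.Dual R V} (hf : f x = 2) (hg : g y = 2)
    (hfy : f y = 0) (hgx : g x = 0) : (Module.reflection hf * Module.reflection hg) ^ 2 = 1 := by
  ext z
  simp only [pow_two, LinearEquiv.mul_apply, Module.reflection_apply, map_sub, map_smul, hf, hg,
    hfy, hgx, LinearEquiv.coe_one, id_eq]
  module

open Polynomial.Chebyshev in
theorem reflection_mul_reflection_pow_eq_one {V : Type*} [AddCommGroup V] [Module ℝ V] {x y : V}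
    {f g : Module.Dual ℝ V} (hf : f x = 2) (hg : g y = 2) {m : ℕ} (hm : 3 ≤ m)
    (hfg : f y * g x = 4 * Real.cos (Real.pi / m) ^ 2) :
    (Module.reflection hf * Module.reflection hg) ^ m = 1 := by
  set θ : ℝ := 2 * (Real.pi / m) with hθ
  have hm3 : (3 : ℝ) ≤ m := by exact_mod_cast hm
  have hmθ : m * θ = 2 * Real.pi := by rw [hθ]; field_simp
  have hcos : 2 * Real.cos θ = f y * g x - 2 := by rw [hfg, hθ, Real.cos_two_mul]; ring
  have hsin : Real.sin θ ≠ 0 :=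
    (Real.sin_pos_of_pos_of_lt_pi (by positivity) (by nlinarith [Real.pi_pos])).ne'
  ext z
  rw [Module.reflection_mul_reflection_pow_apply hf hg m z _ hcos]
  obtain ⟨k, rfl | rfl⟩ := Nat.even_or_odd' m
  · have hS : (S ℝ ((k : ℤ) - 1)).eval (2 * Real.cos θ) = 0 := by
      have hkθ : k * θ = Real.pi := by push_cast at hmθ; linarith
      simp [eval_chebyshevS_two_mul_cos hsin, hkθ]
    rw [show (((2 * k : ℕ) : ℤ) - 2) / 2 = k - 1 by omega,
      show (((2 * k : ℕ) : ℤ) - 1) / 2 = k - 1 by omega, hS]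
    simp
  · have hS : (S ℝ (k : ℤ)).eval (2 * Real.cos θ) + (S ℝ ((k : ℤ) - 1)).eval (2 * Real.cos θ)
        = 0 := by
      have hkθ : (k + 1) * θ = 2 * Real.pi - k * θ := by push_cast at hmθ; linarith
      simp [eval_chebyshevS_two_mul_cos hsin, hkθ, Real.sin_two_pi_sub, neg_div]
    rw [show (((2 * k + 1 : ℕ) : ℤ) - 2) / 2 = k - 1 by omega,
      show (((2 * k + 1 : ℕ) : ℤ) - 1) / 2 = k by omega,
      show (((2 * k + 1 : ℕ) : ℤ) - 3) / 2 = k - 1 by omega,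
      show ((2 * k + 1 : ℕ) : ℤ) / 2 = k by omega, hS]
    simp

section Trace

variable {R V : Type*} [CommRing R] [AddCommGroup V] [Module R V]

theorem trace_eq_of_isConj {A B : V ≃ₗ[R] V} (h : IsConj A B) :
    LinearMap.trace R V (A : V →ₗ[R] V) = LinearMap.trace R V (B : V →ₗ[R] V) := by
  obtain ⟨c, rfl⟩ := isConj_iff.1 h
  exact (LinearMap.trace_conj' (A : V →ₗ[R] V) c).symm

theorem trace_mul_reflection [Module.Free R V] [Module.Finite R V] {x : V} {f : Module.Dual R V}
    (hf : f x = 2) (A : V ≃ₗ[R] V) :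
    LinearMap.trace R V ((A * Module.reflection hf : V ≃ₗ[R] V) : V →ₗ[R] V) =
      LinearMap.trace R V (A : V →ₗ[R] V) - f (A x) := by
  have h : ((A * Module.reflection hf : V ≃ₗ[R] V) : V →ₗ[R] V) = A - f.smulRight (A x) := by
    ext v
    simp [Module.reflection_apply]
  rw [h, map_sub, LinearMap.trace_smulRight]

end Trace

end Reflections

section CoxeterMatrix

variable {S : Type*}

/-- The Coxeter graph of `M`: generators `s ≠ t` are joined unless the label `M s t` is `2`. In
particular it is connected if and only if `M` is irreducible. -/
def coxeterGraph (M : S → S → ℕ) : SimpleGraph S :=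
  SimpleGraph.fromRel fun s t => M s t ≠ 2

/-- The entries `-2 cos (π / M s t)` of the Cartan matrix of `M`. For the label `∞`, which is
encoded as `0`, the convention `π / 0 = 0` gives the customary value `-2`. -/
noncomputable def cartanEntry (M : S → S → ℕ) (s t : S) : ℝ :=
  -2 * Real.cos (Real.pi / M s t)

/-- The simple root of `s`, a basis vector of the space of the geometric representation. -/
noncomputable def simpleRoot (s : S) : S →₀ ℝ :=
  Finsupp.single s 1

/-- The simple coroot of `s`, the linear form taking the value `cartanEntry M s t` at
`simpleRoot t`. -/
noncomputable def simpleCoroot (M : S → S → ℕ) (s : S) : Module.Dual ℝ (S →₀ ℝ) :=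
  Finsupp.linearCombination ℝ (cartanEntry M s)

theorem domLCongr_simpleRoot (σ : Equiv.Perm S) (s : S) :
    (Finsupp.domLCongr σ : (S →₀ ℝ) ≃ₗ[ℝ] (S →₀ ℝ)) (simpleRoot s) = simpleRoot (σ s) :=
  Finsupp.domLCongr_single _ _ _

variable {M : S → S → ℕ}

@[simp]
theorem simpleCoroot_simpleRoot (s t : S) :
    simpleCoroot M s (simpleRoot t) = cartanEntry M s t := by
  simp [simpleCoroot, simpleRoot]

namespace IsCoxeterMatrix

variable (hM : IsCoxeterMatrix M)
include hM

theorem coxeterGraph_adj {s t : S} : (coxeterGraph M).Adj s t ↔ s ≠ t ∧ M s t ≠ 2 := by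
  simp [coxeterGraph, hM.1 t s]

theorem coxeterGraph_eq_top (h2 : ∀ s t, s ≠ t → M s t ≠ 2) : coxeterGraph M = ⊤ := by
  ext s t
  rw [hM.coxeterGraph_adj, SimpleGraph.top_adj, and_iff_left_iff_imp]
  exact h2 s t

theorem cartanEntry_comm (s t : S) : cartanEntry M s t = cartanEntry M t s := by
  rw [cartanEntry, cartanEntry, hM.1 s t]

theorem cartanEntry_self (s : S) : cartanEntry M s s = 2 := by
  simp [cartanEntry, hM.2.1 s]

theorem cartanEntry_lt_neg_one {s t : S} (hst : (coxeterGraph M).Adj s t) (h3 : M s t ≠ 3) :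
    cartanEntry M s t < -1 := by
  obtain ⟨hne, h2⟩ := hM.coxeterGraph_adj.1 hst
  have h1 : M s t ≠ 1 := hM.2.2 s t hne
  obtain h0 | h4 : M s t = 0 ∨ 3 < M s t := by omega
  · norm_num [cartanEntry, h0]
  · have hcos : Real.cos (Real.pi / 3) < Real.cos (Real.pi / M s t) := by
      apply Real.cos_lt_cos_of_nonneg_of_le_pi (by positivity) (by linarith [Real.pi_pos])
      gcongr
      exact_mod_cast h4
    rw [Real.cos_pi_div_three] at hcos
    rw [cartanEntry]
    linarith

theorem cartanEntry_le_neg_one {s t : S} (hst : (coxeterGraph M).Adj s t) :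
    cartanEntry M s t ≤ -1 := by
  by_cases h3 : M s t = 3
  · simp [cartanEntry, h3]
  · exact (hM.cartanEntry_lt_neg_one hst h3).le

theorem cartanEntry_nonpos {s t : S} (hne : s ≠ t) : cartanEntry M s t ≤ 0 := by
  by_cases h2 : M s t = 2
  · simp [cartanEntry, h2]
  · linarith [hM.cartanEntry_le_neg_one (hM.coxeterGraph_adj.2 ⟨hne, h2⟩)]

theorem simpleCoroot_self (s : S) : simpleCoroot M s (simpleRoot s) = 2 := by
  simp [hM.cartanEntry_self]

theorem simpleReflection_mul_pow_eq_one {s t : S} (h2 : 2 ≤ M s t) :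
    (Module.reflection (hM.simpleCoroot_self s) * Module.reflection (hM.simpleCoroot_self t)) ^
      M s t = 1 := by
  have hcomm : cartanEntry M t s = cartanEntry M s t := hM.cartanEntry_comm t s
  obtain h2 | h3 := h2.eq_or_lt
  · have h0 : cartanEntry M s t = 0 := by simp [cartanEntry, ← h2]
    rw [← h2]
    apply reflection_mul_reflection_sq_eq_one <;> simp [hcomm, h0]
  · apply reflection_mul_reflection_pow_eq_one _ _ h3
    rw [simpleCoroot_simpleRoot, simpleCoroot_simpleRoot, hcomm, cartanEntry]
    ring

/-- The geometric representation of the Artin group of `M`: the generator `t_s` acts by the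
reflection in `simpleRoot s`, so this is the pullback of Tits' representation of the Coxeter
group. -/
noncomputable def geomRep : ArtinGroup M →* ((S →₀ ℝ) ≃ₗ[ℝ] (S →₀ ℝ)) :=
  PresentedGroup.toGroup (f := fun s => Module.reflection (hM.simpleCoroot_self s)) <| by
    rintro _ ⟨s, t, -, h2, rfl⟩
    exact lift_altWord_mul_inv_eq_one rfl rfl (hM.simpleReflection_mul_pow_eq_one h2)

theorem geomRep_artinGen (s : S) :
    hM.geomRep (artinGen M s) = Module.reflection (hM.simpleCoroot_self s) :=
  PresentedGroup.toGroup.of _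

theorem geomRep_artinGen_apply (s : S) (v : S →₀ ℝ) :
    hM.geomRep (artinGen M s) v = v - simpleCoroot M s v • simpleRoot s := by
  rw [geomRep_artinGen, Module.reflection_apply]

theorem geomRep_artinGen_zpow_unit (s : S) (e : ℤˣ) :
    hM.geomRep (artinGen M s) ^ (e : ℤ) = hM.geomRep (artinGen M s) := by
  obtain rfl | rfl := Int.units_eq_one_or e
  · simp
  · rw [Units.val_neg, Units.val_one, zpow_neg_one, geomRep_artinGen, Module.reflection_inv]

end IsCoxeterMatrix

end CoxeterMatrix

section OrbitGrowth

variable {S : Type*} {M : S → S → ℕ} (hM : IsCoxeterMatrix M) {p q r : S}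

namespace IsCoxeterMatrix

include hM in
/-- Reflecting in the root with the smallest coordinate makes this coordinate the largest one. -/
theorem exists_geomRep_artinGen_rotate (hpq : (coxeterGraph M).Adj p q)
    (hpr : (coxeterGraph M).Adj p r) (x : ℝ) {y z : ℝ} (hy : 0 ≤ y) (hz : 0 ≤ z) :
    ∃ x', y + z - x ≤ x' ∧
      hM.geomRep (artinGen M p) (x • simpleRoot p + y • simpleRoot q + z • simpleRoot r) =
        y • simpleRoot q + z • simpleRoot r + x' • simpleRoot p := by
  refine ⟨-x - cartanEntry M p q * y - cartanEntry M p r * z, ?_, ?_⟩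
  · have hy' := mul_le_mul_of_nonneg_right (hM.cartanEntry_le_neg_one hpq) hy
    have hz' := mul_le_mul_of_nonneg_right (hM.cartanEntry_le_neg_one hpr) hz
    linarith
  · rw [geomRep_artinGen_apply]
    simp only [map_add, map_smul, simpleCoroot_simpleRoot, hM.cartanEntry_self, smul_eq_mul]
    module

theorem exists_geomRep_coords_ge (n : ℕ) (hpq : (coxeterGraph M).Adj p q)
    (hpr : (coxeterGraph M).Adj p r) (hqr : (coxeterGraph M).Adj q r) {x y z : ℝ} (hx : 0 ≤ x)
    (hxy : x ≤ y) (hyz : y ≤ z) (hxz : x + 1 ≤ z) :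
    ∃ (g : ArtinGroup M) (x' y' z' : ℝ),
      hM.geomRep g (x • simpleRoot p + y • simpleRoot q + z • simpleRoot r) =
        x' • simpleRoot p + y' • simpleRoot q + z' • simpleRoot r ∧
      x + n ≤ x' ∧ x + n ≤ y' ∧ x + n ≤ z' := by
  induction n generalizing p q r x y z with
  | zero => exact ⟨1, x, y, z, by simp, by simp, by simpa, by simpa using hxy.trans hyz⟩
  | succ n ih =>
    obtain ⟨x₁, hx₁, hp⟩ := hM.exists_geomRep_artinGen_rotate hpq hpr x
      (by linarith : 0 ≤ y) (by linarith : 0 ≤ z)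
    obtain ⟨y₁, hy₁, hq⟩ := hM.exists_geomRep_artinGen_rotate hqr hpq.symm y
      (by linarith : 0 ≤ z) (by linarith : 0 ≤ x₁)
    obtain ⟨g, z', x', y', hg, hz', hx', hy'⟩ := ih hpr.symm hqr.symm hpq (x := z) (y := x₁)
      (z := y₁) (by linarith) (by linarith) (by linarith) (by linarith)
    refine ⟨g * (artinGen M q * artinGen M p), x', y', z', ?_, ?_, ?_, ?_⟩
    · rw [map_mul, map_mul, LinearEquiv.mul_apply, LinearEquiv.mul_apply, hp, hq, hg, add_rotate]
    all_goals push_cast; linarith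

theorem exists_geomRep_simpleRoot_coords_ge (n : ℕ) (hpq : (coxeterGraph M).Adj p q)
    (hpr : (coxeterGraph M).Adj p r) (hqr : (coxeterGraph M).Adj q r) :
    ∃ (g : ArtinGroup M) (x y z : ℝ),
      hM.geomRep g (simpleRoot p) = x • simpleRoot p + y • simpleRoot q + z • simpleRoot r ∧
      n ≤ x ∧ n ≤ y ∧ n ≤ z := by
  obtain ⟨g, y, z, x, hg, hy, hz, hx⟩ := hM.exists_geomRep_coords_ge n hqr hpq.symm hpr.symm
    (le_refl (0 : ℝ)) le_rfl zero_le_one (by simp)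
  refine ⟨g, x, y, z, ?_, by simpa using hx, by simpa using hy, by simpa using hz⟩
  rw [add_rotate, ← hg]
  simp

/-- The linear form `ℓ` is bounded on the orbit of `v` under the geometric representation. -/
def BoundedOnOrbit (v : S →₀ ℝ) (ℓ : Module.Dual ℝ (S →₀ ℝ)) : Prop :=
  ∃ C, ∀ g, |ℓ (hM.geomRep g v)| ≤ C

variable {hM} {v : S →₀ ℝ}

theorem BoundedOnOrbit.add {ℓ₁ ℓ₂ : Module.Dual ℝ (S →₀ ℝ)} (h₁ : hM.BoundedOnOrbit v ℓ₁)
    (h₂ : hM.BoundedOnOrbit v ℓ₂) : hM.BoundedOnOrbit v (ℓ₁ + ℓ₂) := by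
  obtain ⟨C₁, h₁⟩ := h₁
  obtain ⟨C₂, h₂⟩ := h₂
  exact ⟨C₁ + C₂, fun g => (abs_add_le _ _).trans (add_le_add (h₁ g) (h₂ g))⟩

theorem BoundedOnOrbit.simpleCoroot_of_adj {s t : S} (hst : (coxeterGraph M).Adj s t)
    (hs : hM.BoundedOnOrbit v (simpleCoroot M s)) : hM.BoundedOnOrbit v (simpleCoroot M t) := by
  obtain ⟨C, hC⟩ := hs
  refine ⟨C + C, fun g => ?_⟩
  have hrefl : simpleCoroot M t (hM.geomRep g v) * cartanEntry M s t =
      simpleCoroot M s (hM.geomRep g v) -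
        simpleCoroot M s (hM.geomRep (artinGen M t * g) v) := by
    rw [map_mul, LinearEquiv.mul_apply, geomRep_artinGen_apply]
    simp
  have hc : 1 ≤ |cartanEntry M s t| := by
    rw [le_abs]
    right
    linarith [hM.cartanEntry_le_neg_one hst]
  calc |simpleCoroot M t (hM.geomRep g v)|
      ≤ |simpleCoroot M t (hM.geomRep g v)| * |cartanEntry M s t| :=
        le_mul_of_one_le_right (abs_nonneg _) hc
    _ = |simpleCoroot M s (hM.geomRep g v) -
          simpleCoroot M s (hM.geomRep (artinGen M t * g) v)| := by rw [← abs_mul, hrefl]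
    _ ≤ C + C := (abs_sub _ _).trans (add_le_add (hC _) (hC _))

theorem BoundedOnOrbit.simpleCoroot_of_preconnected (hconn : (coxeterGraph M).Preconnected)
    {s : S} (hs : hM.BoundedOnOrbit v (simpleCoroot M s)) (t : S) :
    hM.BoundedOnOrbit v (simpleCoroot M t) := by
  obtain ⟨w⟩ := hconn s t
  induction w with
  | nil => exact hs
  | cons hadj _ ih => exact ih (hs.simpleCoroot_of_adj hadj)

variable (hM)

theorem not_boundedOnOrbit_simpleRoot (hpq : (coxeterGraph M).Adj p q)
    (hpr : (coxeterGraph M).Adj p r) (hqr : (coxeterGraph M).Adj q r)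
    {ℓ : Module.Dual ℝ (S →₀ ℝ)} (hp : ℓ (simpleRoot p) ≤ 0) (hq : ℓ (simpleRoot q) ≤ 0)
    (hr : ℓ (simpleRoot r) ≤ 0)
    (hneg : ℓ (simpleRoot p) + ℓ (simpleRoot q) + ℓ (simpleRoot r) < 0) :
    ¬hM.BoundedOnOrbit (simpleRoot p) ℓ := by
  rintro ⟨C, hC⟩
  obtain ⟨n, hn⟩ := exists_nat_gt
    (C / -(ℓ (simpleRoot p) + ℓ (simpleRoot q) + ℓ (simpleRoot r)))
  rw [div_lt_iff₀ (neg_pos.2 hneg)] at hn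
  obtain ⟨g, x, y, z, hg, hx, hy, hz⟩ := hM.exists_geomRep_simpleRoot_coords_ge n hpq hpr hqr
  have hℓ : ℓ (hM.geomRep g (simpleRoot p)) =
      x * ℓ (simpleRoot p) + y * ℓ (simpleRoot q) + z * ℓ (simpleRoot r) := by
    simp [hg]
  have hlower := (abs_le.1 (hC g)).1
  have hx' := mul_le_mul_of_nonpos_right hx hp
  have hy' := mul_le_mul_of_nonpos_right hy hq
  have hz' := mul_le_mul_of_nonpos_right hz hr
  linarith

theorem exists_not_boundedOnOrbit_simpleCoroot_of_ne (hconn : (coxeterGraph M).Preconnected)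
    (hpq : (coxeterGraph M).Adj p q) (hpr : (coxeterGraph M).Adj p r)
    (hqr : (coxeterGraph M).Adj q r) {u : S} (hup : u ≠ p) (huq : u ≠ q) (hur : u ≠ r) :
    ∃ s, ¬hM.BoundedOnOrbit (simpleRoot p) (simpleCoroot M s) := by
  obtain ⟨w⟩ := hconn p u
  obtain ⟨⟨⟨t, s⟩, hts⟩, -, ht, hs⟩ :=
    w.exists_boundary_dart {p, q, r} (by simp) (by simp [hup, huq, hur])
  simp only [Set.mem_insert_iff, Set.mem_singleton_iff, not_or] at ht hs
  have hp := hM.cartanEntry_nonpos hs.1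
  have hq := hM.cartanEntry_nonpos hs.2.1
  have hr := hM.cartanEntry_nonpos hs.2.2
  have hst := hM.cartanEntry_le_neg_one hts.symm
  refine ⟨s, hM.not_boundedOnOrbit_simpleRoot hpq hpr hqr ?_ ?_ ?_ ?_⟩ <;>
    simp only [simpleCoroot_simpleRoot]
  iterate 3 assumption
  rcases ht with rfl | rfl | rfl <;> linarith

theorem not_boundedOnOrbit_sum_simpleCoroot (hpq : (coxeterGraph M).Adj p q)
    (hpr : (coxeterGraph M).Adj p r) (hqr : (coxeterGraph M).Adj q r)
    (h3 : ¬(M p q = 3 ∧ M p r = 3 ∧ M q r = 3)) :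
    ¬hM.BoundedOnOrbit (simpleRoot p) (simpleCoroot M p + simpleCoroot M q + simpleCoroot M r) := by
  have hle {s t : S} (hst : (coxeterGraph M).Adj s t) := hM.cartanEntry_le_neg_one hst
  apply hM.not_boundedOnOrbit_simpleRoot hpq hpr hqr <;>
    simp only [LinearMap.add_apply, simpleCoroot_simpleRoot, hM.cartanEntry_self,
      hM.cartanEntry_comm q p, hM.cartanEntry_comm r p, hM.cartanEntry_comm r q]
  · linarith [hle hpq, hle hpr]
  · linarith [hle hpq, hle hqr]
  · linarith [hle hpr, hle hqr]
  · simp only [not_and_or] at h3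
    rcases h3 with h | h | h
    · linarith [hM.cartanEntry_lt_neg_one hpq h, hle hpr, hle hqr]
    · linarith [hM.cartanEntry_lt_neg_one hpr h, hle hpq, hle hqr]
    · linarith [hM.cartanEntry_lt_neg_one hqr h, hle hpq, hle hpr]

theorem not_boundedOnOrbit_simpleCoroot_of_triangle (hconn : (coxeterGraph M).Preconnected)
    (hpq : (coxeterGraph M).Adj p q) (hpr : (coxeterGraph M).Adj p r)
    (hqr : (coxeterGraph M).Adj q r)
    (haff : M p q = 3 → M p r = 3 → M q r = 3 → ∃ u, u ≠ p ∧ u ≠ q ∧ u ≠ r) (s : S) :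
    ¬hM.BoundedOnOrbit (simpleRoot p) (simpleCoroot M s) := by
  intro hs
  have hb : ∀ t, hM.BoundedOnOrbit (simpleRoot p) (simpleCoroot M t) :=
    hs.simpleCoroot_of_preconnected hconn
  by_cases h3 : M p q = 3 ∧ M p r = 3 ∧ M q r = 3
  · obtain ⟨u, hup, huq, hur⟩ := haff h3.1 h3.2.1 h3.2.2
    obtain ⟨t, ht⟩ := hM.exists_not_boundedOnOrbit_simpleCoroot_of_ne hconn hpq hpr hqr hup huq hur
    exact ht (hb t)
  · exact hM.not_boundedOnOrbit_sum_simpleCoroot hpq hpr hqr h3 (((hb p).add (hb q)).add (hb r))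

end IsCoxeterMatrix

end OrbitGrowth

section SmallAutomorphisms

theorem semiconjBy_of_presentedGroup_of {α G : Type*} [Group G] {rels : Set (FreeGroup α)}
    {ρ ρ' : PresentedGroup rels →* G} {T : G}
    (h : ∀ s, SemiconjBy T (ρ (PresentedGroup.of s)) (ρ' (PresentedGroup.of s)))
    (x : PresentedGroup rels) : SemiconjBy T (ρ x) (ρ' x) := by
  have hconj : (MulAut.conj T).toMonoidHom.comp ρ = ρ' :=
    PresentedGroup.ext fun s => mul_inv_eq_iff_eq_mul.2 (h s).eq
  exact mul_inv_eq_iff_eq_mul.1 (DFunLike.congr_fun hconj x)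

variable {S : Type*} {M : S → S → ℕ}

theorem exists_eq_conj_zpow_of_mem_closure_autGammaGens {φ : MulAut (ArtinGroup M)}
    (hφ : φ ∈ Subgroup.closure (autGammaGens M)) :
    ∃ (a : ArtinGroup M) (σ : Equiv.Perm S) (e : ℤˣ), (∀ s t, M (σ s) (σ t) = M s t) ∧
      ∀ s, φ (artinGen M s) = a * artinGen M (σ s) ^ (e : ℤ) * a⁻¹ := by
  induction hφ using Subgroup.closure_induction with
  | mem φ hφ =>
    obtain ⟨a, ha⟩ | ⟨σ, hσ, hφσ⟩ | hinv := hφ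
    · exact ⟨a, 1, 1, fun _ _ => rfl, fun s => by simp [ha]⟩
    · exact ⟨1, σ, 1, hσ, fun s => by simp [hφσ]⟩
    · exact ⟨1, 1, -1, fun _ _ => rfl, fun s => by simp [hinv]⟩
  | one => exact ⟨1, 1, 1, fun _ _ => rfl, fun s => by simp⟩
  | mul φ ψ _ _ hφ hψ =>
    obtain ⟨a, σ, e, hσ, hφ⟩ := hφ
    obtain ⟨b, τ, d, hτ, hψ⟩ := hψ
    refine ⟨φ b * a, σ * τ, e * d, fun s t => by simp [hσ, hτ], fun s => ?_⟩
    rw [MulAut.mul_apply, hψ, map_mul, map_mul, map_zpow, hφ, conj_zpow, ← zpow_mul, map_inv]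
    simp [mul_assoc]
  | inv φ _ hφ =>
    obtain ⟨a, σ, e, hσ, hφ⟩ := hφ
    refine ⟨(φ⁻¹ a)⁻¹, σ⁻¹, e, fun s t => by rw [← hσ]; simp, fun s => φ.injective ?_⟩
    have he : (e : ℤ) * e = 1 := by rw [← Units.val_mul, Int.units_mul_self, Units.val_one]
    rw [map_mul, map_mul, map_zpow, hφ, conj_zpow, ← zpow_mul, he]
    simp [mul_assoc]

namespace IsCoxeterMatrix

variable (hM : IsCoxeterMatrix M)

theorem semiconjBy_domLCongr_geomRep_artinGen {σ : Equiv.Perm S}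
    (hσ : ∀ s t, M (σ s) (σ t) = M s t) (s : S) :
    SemiconjBy (Finsupp.domLCongr σ) (hM.geomRep (artinGen M s))
      (hM.geomRep (artinGen M (σ s))) := by
  have hentry (t : S) : cartanEntry M (σ s) (σ t) = cartanEntry M s t := by
    rw [cartanEntry, cartanEntry, hσ]
  apply LinearEquiv.toLinearMap_injective
  ext1 t
  ext1
  change (Finsupp.domLCongr σ : (S →₀ ℝ) ≃ₗ[ℝ] (S →₀ ℝ))
      (hM.geomRep (artinGen M s) (simpleRoot t)) =
    hM.geomRep (artinGen M (σ s)) (Finsupp.domLCongr σ (simpleRoot t))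
  simp only [geomRep_artinGen_apply, map_sub, map_smul, domLCongr_simpleRoot,
    simpleCoroot_simpleRoot, hentry]

theorem exists_semiconjBy_geomRep {φ : MulAut (ArtinGroup M)}
    (hφ : φ ∈ Subgroup.closure (autGammaGens M)) :
    ∃ (a : ArtinGroup M) (σ : Equiv.Perm S), ∀ x,
      SemiconjBy (hM.geomRep a * Finsupp.domLCongr σ) (hM.geomRep x) (hM.geomRep (φ x)) := by
  obtain ⟨a, σ, e, hσ, hφ⟩ := exists_eq_conj_zpow_of_mem_closure_autGammaGens hφ
  refine ⟨a, σ, semiconjBy_of_presentedGroup_of (ρ' := hM.geomRep.comp φ.toMonoidHom) fun s => ?_⟩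
  have ha : SemiconjBy (hM.geomRep a) (hM.geomRep (artinGen M (σ s)))
      (hM.geomRep (φ (artinGen M s))) := by
    rw [hφ, map_mul, map_mul, map_inv, map_zpow, geomRep_artinGen_zpow_unit]
    exact SemiconjBy.conj_mk _ _
  exact ha.mul_left (hM.semiconjBy_domLCongr_geomRep_artinGen hσ s)

/-- The trace of `g`, acting in the geometric representation, composed with the permutation `σ` of
the simple roots. If the automorphism `φ` is induced by `σ`, this is constant on `φ`-twisted
conjugacy classes. It is only meaningful for finite `S`, as `LinearMap.trace` is `0` otherwise. -/
noncomputable def twistedTrace (σ : Equiv.Perm S) (g : ArtinGroup M) : ℝ :=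
  LinearMap.trace ℝ (S →₀ ℝ)
    (hM.geomRep g * Finsupp.domLCongr σ : (S →₀ ℝ) ≃ₗ[ℝ] (S →₀ ℝ))

theorem twistedTrace_artinGen_mul [Finite S] (σ : Equiv.Perm S) (s : S) (g : ArtinGroup M) :
    hM.twistedTrace σ (artinGen M s * g) =
      hM.twistedTrace σ g - simpleCoroot M s (hM.geomRep g (simpleRoot (σ s))) := by
  have hcycl : IsConj (hM.geomRep (artinGen M s * g) * Finsupp.domLCongr σ)
      (hM.geomRep g * Finsupp.domLCongr σ * hM.geomRep (artinGen M s)) :=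
    isConj_iff.2 ⟨(hM.geomRep (artinGen M s))⁻¹, by simp [mul_assoc]⟩
  rw [twistedTrace, trace_eq_of_isConj hcycl, geomRep_artinGen, trace_mul_reflection,
    LinearEquiv.mul_apply, domLCongr_simpleRoot, twistedTrace]

theorem boundedOnOrbit_of_finite_range_twistedTrace [Finite S] {σ : Equiv.Perm S}
    (hfin : (Set.range (hM.twistedTrace σ)).Finite) (s : S) :
    hM.BoundedOnOrbit (simpleRoot (σ s)) (simpleCoroot M s) := by
  obtain ⟨C, hC⟩ := hfin.isBounded.exists_norm_le
  have htrace (g : ArtinGroup M) : |hM.twistedTrace σ g| ≤ C := hC _ ⟨g, rfl⟩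
  refine ⟨C + C, fun g => ?_⟩
  have hsub : simpleCoroot M s (hM.geomRep g (simpleRoot (σ s))) =
      hM.twistedTrace σ g - hM.twistedTrace σ (artinGen M s * g) := by
    rw [twistedTrace_artinGen_mul, sub_sub_cancel]
  rw [hsub]
  exact (abs_sub _ _).trans (add_le_add (htrace _) (htrace _))

theorem infinite_range_twistedTrace [Finite S] {p q r : S}
    (hconn : (coxeterGraph M).Preconnected) (hpq : (coxeterGraph M).Adj p q)
    (hpr : (coxeterGraph M).Adj p r) (hqr : (coxeterGraph M).Adj q r)
    (haff : M p q = 3 → M p r = 3 → M q r = 3 → ∃ u, u ≠ p ∧ u ≠ q ∧ u ≠ r) (σ : Equiv.Perm S) :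
    (Set.range (hM.twistedTrace σ)).Infinite := by
  intro hfin
  have hbdd := hM.boundedOnOrbit_of_finite_range_twistedTrace hfin (σ.symm p)
  rw [σ.apply_symm_apply] at hbdd
  exact hM.not_boundedOnOrbit_simpleCoroot_of_triangle hconn hpq hpr hqr haff _ hbdd

end IsCoxeterMatrix

end SmallAutomorphisms

theorem largeType_hyperbolicType_smallAut_propertyRInfinity_general {S : Type*} [Finite S]
    {M : S → S → ℕ} (hM : IsCoxeterMatrix M) (hconn : (coxeterGraph M).Preconnected) {p q r : S}
    (hpq : (coxeterGraph M).Adj p q) (hpr : (coxeterGraph M).Adj p r)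
    (hqr : (coxeterGraph M).Adj q r)
    (haff : M p q = 3 → M p r = 3 → M q r = 3 → ∃ u, u ≠ p ∧ u ≠ q ∧ u ≠ r)
    {φ : MulAut (ArtinGroup M)} (hφ : φ ∈ Subgroup.closure (autGammaGens M)) :
    ReidemeisterInfinite φ := by
  obtain ⟨a, σ, hT⟩ := hM.exists_semiconjBy_geomRep hφ
  have hconst (g h : ArtinGroup M) (hgh : TwistedConj φ g h) :
      hM.twistedTrace σ (g * a) = hM.twistedTrace σ (h * a) := by
    simpa only [IsCoxeterMatrix.twistedTrace, map_mul, mul_assoc] using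
      trace_eq_of_isConj (hgh.isConj_map_mul hT)
  apply reidemeisterInfinite_of_infinite_range hconst
  have hrange := (Equiv.mulRight a).surjective.range_comp (hM.twistedTrace σ)
  exact hrange ▸ hM.infinite_range_twistedTrace hconn hpq hpr hqr haff σ

/-- If a large-type, hyperbolic-type Artin group (on at least 3 generators) satisfies
`Aut(A[M]) = Aut_Γ(A[M])`, then it has property `R_∞`. -/
theorem largeType_hyperbolicType_smallAut_propertyRInfinity
    {S : Type*} [Fintype S] (hcard : 3 ≤ Fintype.card S)
    (M : S → S → ℕ) (hM : IsCoxeterMatrix M)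
    (hlarge : ∀ s t : S, s ≠ t → M s t = 0 ∨ 3 ≤ M s t)
    (hhyp : ¬ ∃ s t u : S, s ≠ t ∧ t ≠ u ∧ s ≠ u ∧ M s t = 3 ∧ M t u = 3 ∧ M s u = 3)
    (hsmall : ∀ ψ : MulAut (ArtinGroup M), ψ ∈ Subgroup.closure (autGammaGens M)) :
    PropertyRInfinity (ArtinGroup M) := by
  intro φ
  obtain ⟨p, q, r, hpq, hpr, hqr⟩ := Fintype.two_lt_card_iff.1 hcard
  have hcomplete : coxeterGraph M = ⊤ := hM.coxeterGraph_eq_top fun s t hst => by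
    have := hlarge s t hst
    omega
  have hadj {s t : S} (hst : s ≠ t) : (coxeterGraph M).Adj s t := by rwa [hcomplete]
  have hconn : (coxeterGraph M).Preconnected := hcomplete ▸ SimpleGraph.preconnected_top
  exact largeType_hyperbolicType_smallAut_propertyRInfinity_general hM hconn (hadj hpq) (hadj hpr)
    (hadj hqr) (fun h₁ h₂ h₃ => absurd ⟨p, q, r, hpq, hqr, hpr, h₁, h₃, h₂⟩ hhyp) (hsmall φ)
end
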